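/- arXiv:1609.03049 — 2 statements merged into one kernel-verified Lean document; each statement's English description precedes it below -/
import Mathlib

section
/- Let N be a matroid and let {e, f} be a series pair of N. Then the contraction N/e belongs to \overline{BL} if and only if N belongs to \overline{BL}. -/
/-!
The proof replaces cycles by elements of the cycle space. Call a nonempty finite edge set even if
all its degrees are even. The cycles of a graph are exactly the minimal even sets (`isCycle_iff`),
and a set contains two distinct cycles exactly when it contains two distinct even sets
(`hasTwoCycles_iff`). Hence `X` is dependent in `M(G)` when it contains at least one even set, and
dependent in `L(G)` when it contains at least two. Any bijection between families of even sets
therefore treats graphic and bicircular lift matroids simultaneously (`Rep`).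

If `e` is not a loop of `G`, then `A ↦ A \ {e}` is a bijection from the even sets of `G` inside
`X ∪ {e}` to the even sets of `G / e` inside `X` (`bijOn_ctr`), so `M(G) / e = M(G / e)` and
`L(G) / e = L(G / e)`. If `e` is a loop of `G`, then `L(G) / e = M(G \ e)`. As `e` belongs to a
series pair, it is not a loop of `N`, and so `N / e` is in the class whenever `N` is.

Conversely, let `G` represent `N / e`, and let `H` arise by subdividing `f` into `f` and `e`. The
even sets of `H` are obtained from those of `G` by adding `e` to the ones containing `f`
(`bijOn_sub`). As `{e, f}` is a series pair, the dependent sets of `N` arise from those of `N / e`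
in the same way (`SeriesPair.dep_iff`), so `H` represents `N`.
-/

open Set Matroid

universe u

namespace BLFormal

/-! ### Matroid preliminaries -/

/-- A circuit of a matroid: a minimal dependent set. -/
def Circuit {α : Type u} (M : Matroid α) (C : Set α) : Prop := Minimal M.Dep C

/-- Deletion of a set of elements from a matroid. -/
def del {α : Type u} (M : Matroid α) (D : Set α) : Matroid α := M ↾ (M.E \ D)

/-- Contraction of a set of elements of a matroid, defined by duality. -/
def con {α : Type u} (M : Matroid α) (C : Set α) : Matroid α := (del M✶ C)✶

/-- `N` is a minor of `M` if it is obtained by a contraction followed by a deletion. -/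
def IsMinor {α : Type u} (N M : Matroid α) : Prop := ∃ C D : Set α, N = del (con M C) D

/-- `N` is a proper (strict) minor of `M`. -/
def IsStrictMinor {α : Type u} (N M : Matroid α) : Prop := IsMinor N M ∧ N ≠ M

/-- The rank of a set `X` in the matroid `M`, as an extended natural number:
the supremum of the cardinalities of the independent subsets of `X`. -/
noncomputable def eRk {α : Type u} (M : Matroid α) (X : Set α) : ℕ∞ :=
  ⨆ I : {I : Set α // M.Indep I ∧ I ⊆ X}, (I : Set α).encard

/-- The rank `r(M)` of a matroid, as an extended natural number. -/
noncomputable def eRank {α : Type u} (M : Matroid α) : ℕ∞ := eRk M M.E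

/-- A loop of a matroid. -/
def MLoop {α : Type u} (M : Matroid α) (e : α) : Prop := M.Dep {e}

/-- A coloop of a matroid: a loop of the dual. -/
def MColoop {α : Type u} (M : Matroid α) (e : α) : Prop := MLoop M✶ e

/-- A `k`-separation of a matroid: a partition `(X, Y)` of the ground set with
`|X|, |Y| ≥ k` and `r(X) + r(Y) - r(M) ≤ k - 1`. -/
def IsKSep {α : Type u} (M : Matroid α) (k : ℕ) (X Y : Set α) : Prop :=
  X ∪ Y = M.E ∧ Disjoint X Y ∧ (k : ℕ∞) ≤ X.encard ∧ (k : ℕ∞) ≤ Y.encard ∧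
    eRk M X + eRk M Y ≤ eRank M + ((k - 1 : ℕ) : ℕ∞)

/-- A matroid is connected if it has no 1-separation. -/
def MConnected {α : Type u} (M : Matroid α) : Prop := ¬ ∃ X Y, IsKSep M 1 X Y

/-- A matroid is 3-connected if it is connected and has no 2-separation. -/
def ThreeConnected {α : Type u} (M : Matroid α) : Prop :=
  MConnected M ∧ ¬ ∃ X Y, IsKSep M 2 X Y

/-- Two elements of a matroid form a series pair if no circuit contains exactly one
of them, and some circuit contains both. -/
def SeriesPair {α : Type u} (M : Matroid α) (e f : α) : Prop :=
  (∀ C, Circuit M C → (e ∈ C ↔ f ∈ C)) ∧ ∃ C, Circuit M C ∧ e ∈ C ∧ f ∈ C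

/-- A series class: a maximal set in which every two elements form a series pair. -/
def IsSeriesClass {α : Type u} (M : Matroid α) (S : Set α) : Prop :=
  Maximal (fun T => T.Nonempty ∧ ∀ e ∈ T, ∀ f ∈ T, SeriesPair M e f) S

/-- `N` is a cosimplification `co(M)` of `M`: it is obtained from `M` by contracting
all coloops and, in each series class, all but one element. -/
def IsCosimplification {α : Type u} (M N : Matroid α) : Prop :=
  ∃ D ⊆ M.E, N = con M D ∧ (∀ e, MColoop M e → e ∈ D) ∧
    ∀ S, IsSeriesClass M S → ∃ x ∈ S, S \ D = {x}

/-- `M` is isomorphic to the uniform matroid `U_{k, n}`: the ground set has `n` elements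
and the circuits are precisely the `(k+1)`-element subsets of the ground set. -/
def IsUnif {α : Type u} (k n : ℕ) (M : Matroid α) : Prop :=
  M.E.encard = n ∧ ∀ C, Circuit M C ↔ C ⊆ M.E ∧ C.encard = k + 1

/-- `M` has a `U_{2,4}`-minor. -/
def HasU24Minor {α : Type u} (M : Matroid α) : Prop := ∃ N, IsMinor N M ∧ IsUnif 2 4 N

/-- `M` is isomorphic to the direct sum `U_{2,4} ⊕ U_{0,1}` of `U_{2,4}` and a loop:
its ground set consists of a 4-element set `X` together with one further element `l`,
and its circuits are `{l}` and the 3-element subsets of `X`. -/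
def IsU24PlusLoop {α : Type u} (M : Matroid α) : Prop :=
  ∃ (X : Set α) (l : α), l ∉ X ∧ M.E = insert l X ∧ X.encard = 4 ∧
    ∀ C, Circuit M C ↔ (C = {l} ∨ (C ⊆ X ∧ C.encard = 3))

/-- `M` is isomorphic to the Fano matroid `F₇`: the rank-3 matroid represented over
`GF(2)` by the seven nonzero vectors of `GF(2)³`. -/
def IsFano {α : Type u} (M : Matroid α) : Prop :=
  ∃ v : α → (Fin 3 → ZMod 2),
    Set.BijOn v M.E {w | w ≠ 0} ∧
    ∀ I ⊆ M.E, (M.Indep I ↔ LinearIndependent (ZMod 2) (fun x : I => v x))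

/-! ### Graphs (with loops and parallel edges allowed) -/

/-- A graph on vertex type `V`, with edge set `E` living in the ambient edge type `α`;
each edge is sent to the unordered pair of its end-vertices. -/
structure Graph (V : Type u) (α : Type u) where
  E : Set α
  inc : α → Sym2 V

namespace Graph

variable {V : Type u} {α : Type u}

/-- The vertices incident with an edge set `C`. -/
def vertsOf (G : Graph V α) (C : Set α) : Set V := {v | ∃ e ∈ C, v ∈ G.inc e}

/-- The vertex set of a graph (we consider graphs without isolated vertices). -/
def verts (G : Graph V α) : Set V := G.vertsOf G.E

/-- Deletion of a set of edges from a graph. -/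
def delete (G : Graph V α) (D : Set α) : Graph V α := ⟨G.E \ D, G.inc⟩

/-- The degree of a vertex `v` in the edge set `C`, with loops counting twice. -/
noncomputable def deg (G : Graph V α) (C : Set α) (v : V) : ℕ :=
  {e ∈ C | v ∈ G.inc e}.ncard + {e ∈ C | G.inc e = Sym2.diag v}.ncard

/-- Two vertices are adjacent via an edge of `C`. -/
def AdjOn (G : Graph V α) (C : Set α) (u v : V) : Prop := ∃ e ∈ C, G.inc e = s(u, v)

/-- The subgraph with edge set `C` is connected. -/
def ConnectedOn (G : Graph V α) (C : Set α) : Prop :=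
  ∀ u ∈ G.vertsOf C, ∀ v ∈ G.vertsOf C, Relation.ReflTransGen (G.AdjOn C) u v

/-- `C` is a cycle of `G` : the edge set of a connected 2-regular subgraph. -/
def IsCycle (G : Graph V α) (C : Set α) : Prop :=
  C ⊆ G.E ∧ C.Finite ∧ C.Nonempty ∧ (∀ v ∈ G.vertsOf C, G.deg C v = 2) ∧ G.ConnectedOn C

/-- A graph is 2-edge-connected if each of its edges lies in a cycle. -/
def TwoEdgeConnected (G : Graph V α) : Prop := ∀ e ∈ G.E, ∃ C, G.IsCycle C ∧ e ∈ C

/-- A graph is connected if it has at least one vertex and any two of its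
vertices are joined by a path. -/
def Connected (G : Graph V α) : Prop := G.verts.Nonempty ∧ G.ConnectedOn G.E

/-- Delete a vertex from a graph (removing all edges incident with it). -/
def delVert (G : Graph V α) (v : V) : Graph V α := ⟨{e ∈ G.E | v ∉ G.inc e}, G.inc⟩

/-- A graph is 2-connected if it is connected and stays connected after the
deletion of any vertex. -/
def TwoConnected (G : Graph V α) : Prop :=
  G.Connected ∧ ∀ v ∈ G.verts, (G.delVert v).Connected

/-- `X` contains at least two (distinct) cycles of `G`. -/
def HasTwoCycles (G : Graph V α) (X : Set α) : Prop :=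
  ∃ C₁ C₂, G.IsCycle C₁ ∧ G.IsCycle C₂ ∧ C₁ ≠ C₂ ∧ C₁ ⊆ X ∧ C₂ ⊆ X

/-- The circuits of the bicircular lift matroid of `G`: edge sets containing at
least two cycles and minimal with this property. -/
def LiftCircuit (G : Graph V α) (X : Set α) : Prop :=
  Minimal (fun Y => Y ⊆ G.E ∧ G.HasTwoCycles Y) X

/-- Two edges of a graph form a series pair if no cycle contains exactly one of
them, and some cycle contains both. -/
def SeriesPair (G : Graph V α) (e f : α) : Prop :=
  (∀ C, G.IsCycle C → (e ∈ C ↔ f ∈ C)) ∧ ∃ C, G.IsCycle C ∧ e ∈ C ∧ f ∈ C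

end Graph

/-- `N` is the bicircular lift matroid `L(G)` of `G` : its ground set is `E(G)`
and its circuits are the lift circuits of `G`. -/
def IsLiftRep {V α : Type u} (G : Graph V α) (N : Matroid α) : Prop :=
  N.E = G.E ∧ ∀ C, Circuit N C ↔ G.LiftCircuit C

/-- `N` is the cycle matroid `M(G)` of `G` : its ground set is `E(G)` and its
circuits are the cycles of `G`. -/
def IsGraphicRep {V α : Type u} (G : Graph V α) (N : Matroid α) : Prop :=
  N.E = G.E ∧ ∀ C, Circuit N C ↔ G.IsCycle C

/-- A matroid is bicircular lift if it is (isomorphic to) `L(G)` for some graph `G`. -/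
def IsBicircularLift {α : Type u} (N : Matroid α) : Prop :=
  ∃ (V : Type u) (G : Graph V α), IsLiftRep G N

/-- A matroid is graphic if it is (isomorphic to) the cycle matroid of some graph. -/
def IsGraphic {α : Type u} (N : Matroid α) : Prop :=
  ∃ (V : Type u) (G : Graph V α), IsGraphicRep G N

/-- The class `BL-bar` of matroids that are graphic or bicircular lift. -/
def InBL {α : Type u} (N : Matroid α) : Prop := IsGraphic N ∨ IsBicircularLift N

/-- `M` is an excluded minor for the class `BL-bar`. -/
def ExcludedMinorBL {α : Type u} (M : Matroid α) : Prop :=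
  ¬ InBL M ∧ ∀ N, IsStrictMinor N M → InBL N

/-! ### Special graphs and subdivisions -/

/-- `G` is (a copy of) the complete graph `K₄`. -/
def IsK4 {V α : Type u} (G : Graph V α) : Prop :=
  ∃ v : Fin 4 → V, Function.Injective v ∧
    ∃ ed : {p : Sym2 (Fin 4) // ¬ p.IsDiag} → α, Function.Injective ed ∧
      G.E = Set.range ed ∧ ∀ p, G.inc (ed p) = Sym2.map v p.1

/-- `G` is (a copy of) the complete graph `K₅`. -/
def IsK5 {V α : Type u} (G : Graph V α) : Prop :=
  ∃ v : Fin 5 → V, Function.Injective v ∧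
    ∃ ed : {p : Sym2 (Fin 5) // ¬ p.IsDiag} → α, Function.Injective ed ∧
      G.E = Set.range ed ∧ ∀ p, G.inc (ed p) = Sym2.map v p.1

/-- `G` is (a copy of) the complete bipartite graph `K₃,₃`. -/
def IsK33 {V α : Type u} (G : Graph V α) : Prop :=
  ∃ a b : Fin 3 → V, Function.Injective a ∧ Function.Injective b ∧
    Set.range a ∩ Set.range b = ∅ ∧
    ∃ ed : Fin 3 × Fin 3 → α, Function.Injective ed ∧
      G.E = Set.range ed ∧ ∀ p, G.inc (ed p) = s(a p.1, b p.2)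

/-- `G` is (a copy of) the graph `K₂ⁿ` with two vertices joined by `n` parallel edges. -/
def IsK2n {V α : Type u} (n : ℕ) (G : Graph V α) : Prop :=
  ∃ u v : V, u ≠ v ∧ ∃ ed : Fin n → α, Function.Injective ed ∧
    G.E = Set.range ed ∧ ∀ i, G.inc (ed i) = s(u, v)

/-- `H` is obtained from `G` by subdividing a single edge. -/
def ElemSub {V α : Type u} (G H : Graph V α) : Prop :=
  ∃ e ∈ G.E, ∃ (f g : α) (u v w : V),
    G.inc e = s(u, v) ∧ w ∉ G.verts ∧ f ≠ g ∧
    f ∉ G.E \ {e} ∧ g ∉ G.E \ {e} ∧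
    H.E = (G.E \ {e}) ∪ {f, g} ∧
    H.inc f = s(u, w) ∧ H.inc g = s(w, v) ∧
    ∀ x ∈ G.E \ {e}, H.inc x = G.inc x

/-- `H` is a subdivision of `G` : it is obtained from `G` by repeatedly
subdividing edges. -/
def IsSubdivision {V α : Type u} (G H : Graph V α) : Prop :=
  Relation.ReflTransGen ElemSub G H

/-! ### 2-sums and simplification -/

/-- `N` is the 2-sum `N₁ ⊕₂ᵉ N₂` of `N₁` and `N₂` along `e`. -/
def Is2Sum {α : Type u} (N N₁ N₂ : Matroid α) (e : α) : Prop :=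
  N₁.E ∩ N₂.E = {e} ∧
  ¬ MLoop N₁ e ∧ ¬ MColoop N₁ e ∧ ¬ MLoop N₂ e ∧ ¬ MColoop N₂ e ∧
  N.E = (N₁.E ∪ N₂.E) \ {e} ∧
  ∀ C, Circuit N C ↔
    ((Circuit N₁ C ∧ e ∉ C) ∨ (Circuit N₂ C ∧ e ∉ C) ∨
      ∃ C₁ C₂, Circuit N₁ C₁ ∧ Circuit N₂ C₂ ∧ e ∈ C₁ ∧ e ∈ C₂ ∧
        C = (C₁ \ {e}) ∪ (C₂ \ {e}))

/-- `H` is a simplification `si(G)` of `G` : it is obtained from `G` by deleting all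
loops and all but one edge of each parallel class. -/
def IsSimplification {V α : Type u} (G H : Graph V α) : Prop :=
  H.inc = G.inc ∧ H.E ⊆ G.E ∧ (∀ e ∈ H.E, ¬ (G.inc e).IsDiag) ∧
    ∀ e ∈ G.E, ¬ (G.inc e).IsDiag → ∃! f, f ∈ H.E ∧ G.inc f = G.inc e

/-- `H` is 2-connected, or is obtained from a 2-connected graph and a single edge `K₂`
by identifying one end-vertex of the edge with a vertex of the 2-connected graph. -/
def TwoConnOrPendant {V α : Type u} (H : Graph V α) : Prop :=
  H.TwoConnected ∨
    ∃ (e : α) (u w : V), e ∈ H.E ∧ H.inc e = s(u, w) ∧ u ≠ w ∧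
      (H.delete {e}).TwoConnected ∧ u ∈ (H.delete {e}).verts ∧ w ∉ (H.delete {e}).verts

/-! ### Even edge sets -/

open Classical in
/-- The number of ends of the (potential) edge `z` equal to `v`; a loop at `v` has two. -/
noncomputable def mult {V : Type u} (z : Sym2 V) (v : V) : ℕ :=
  (if v ∈ z then 1 else 0) + (if z = Sym2.diag v then 1 else 0)

open Classical in
lemma mult_mk {V : Type u} (a b v : V) :
    mult s(a, b) v = (if v = a then 1 else 0) + (if v = b then 1 else 0) := by
  have : s(a, b) = Sym2.diag v ↔ a = v ∧ b = v := by simp [Sym2.diag]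
  unfold mult
  simp only [Sym2.mem_iff, this]
  grind

/-- The degree of `v` in the finite edge set `A`, as a sum over the edges. -/
noncomputable def sdeg {V α : Type u} (i : α → Sym2 V) (A : Finset α) (v : V) : ℕ :=
  ∑ x ∈ A, mult (i x) v

lemma deg_coe {V α : Type u} (G : Graph V α) (A : Finset α) (v : V) :
    G.deg (A : Set α) v = sdeg G.inc A v := by
  classical
  unfold Graph.deg sdeg mult
  rw [Finset.sum_add_distrib, ← Finset.card_filter, ← Finset.card_filter,
    ← Set.ncard_coe_finset, ← Set.ncard_coe_finset]
  simp

/-- A nonempty finite edge set in which every vertex has even degree: a nonzero element of the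
cycle space. -/
def EvenSet {V α : Type u} (i : α → Sym2 V) (A : Finset α) : Prop :=
  A.Nonempty ∧ ∀ v, Even (sdeg i A v)

/-- The nonempty even sets contained in `X`. -/
def Ev {V α : Type u} (i : α → Sym2 V) (X : Set α) : Set (Finset α) :=
  {A | (A : Set α) ⊆ X ∧ EvenSet i A}

lemma Ev_mono {V α : Type u} (i : α → Sym2 V) {X Y : Set α} (h : X ⊆ Y) : Ev i X ⊆ Ev i Y :=
  fun _ hA => ⟨hA.1.trans h, hA.2⟩

lemma exists_minimal_even {V α : Type u} {i : α → Sym2 V} {A : Finset α} (hA : EvenSet i A) :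
    ∃ C ⊆ A, Minimal (EvenSet i) C :=
  exists_minimal_le_of_wellFoundedLT (EvenSet i) A hA

lemma sdeg_mono {V α : Type u} (i : α → Sym2 V) {A B : Finset α} (h : A ⊆ B) (v : V) :
    sdeg i A v ≤ sdeg i B v := Finset.sum_le_sum_of_subset h

lemma sdeg_pos_iff {V α : Type u} (i : α → Sym2 V) (A : Finset α) (v : V) :
    0 < sdeg i A v ↔ ∃ x ∈ A, v ∈ i x := by
  classical
  unfold sdeg
  rw [Finset.sum_pos_iff]
  refine exists_congr fun x => and_congr_right fun _ => ?_
  induction i x with | _ a b => rw [mult_mk, Sym2.mem_iff]; grind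

open Classical in
lemma sdeg_sdiff {V α : Type u} (i : α → Sym2 V) {A B : Finset α} (h : B ⊆ A) (v : V) :
    sdeg i (A \ B) v + sdeg i B v = sdeg i A v := Finset.sum_sdiff h

open Classical in
lemma sdeg_erase {V α : Type u} (i : α → Sym2 V) {A : Finset α} {e : α} (h : e ∈ A) (v : V) :
    sdeg i (A.erase e) v + mult (i e) v = sdeg i A v := Finset.sum_erase_add _ _ h

open Classical in
lemma sdeg_insert {V α : Type u} (i : α → Sym2 V) {A : Finset α} {e : α} (h : e ∉ A) (v : V) :
    sdeg i (insert e A) v = mult (i e) v + sdeg i A v := Finset.sum_insert h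

open Classical in
lemma EvenSet.sdiff {V α : Type u} {i : α → Sym2 V} {A B : Finset α} (hA : EvenSet i A)
    (hB : EvenSet i B) (h : B ⊆ A) (hne : B ≠ A) : EvenSet i (A \ B) := by
  refine ⟨Finset.sdiff_nonempty.2 fun h' => hne (h.antisymm h'), fun v => ?_⟩
  have h1 := sdeg_sdiff i h v
  have h2 := hA.2 v
  have h3 := hB.2 v
  rw [← h1, Nat.even_add] at h2
  exact h2.2 h3

/-! ### Contracting a non-loop edge -/

open Classical in
/-- The incidence function obtained by identifying the vertex `v` with `u`. If `e` has the two
distinct ends `u` and `v`, this is the incidence function of `G / e`. -/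
noncomputable def ctr {V α : Type u} (i : α → Sym2 V) (u v : V) (x : α) : Sym2 V :=
  (i x).map (Function.update id v u)

open Classical in
lemma mult_ctr {V α : Type u} (i : α → Sym2 V) {u v : V} (huv : u ≠ v) (x : α) (w : V) :
    mult (ctr i u v x) w =
      if w = v then 0 else if w = u then mult (i x) u + mult (i x) v else mult (i x) w := by
  unfold ctr
  induction i x with | _ a b =>
  simp only [Sym2.map_mk, mult_mk, Function.update_apply, id]
  grind

open Classical in
lemma sdeg_ctr {V α : Type u} (i : α → Sym2 V) {u v : V} (huv : u ≠ v) (A : Finset α) (w : V) :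
    sdeg (ctr i u v) A w =
      if w = v then 0 else if w = u then sdeg i A u + sdeg i A v else sdeg i A w := by
  unfold sdeg
  simp only [mult_ctr i huv]
  split_ifs <;> simp [Finset.sum_add_distrib]

open Classical in
/-- Even sets of `G / e` are exactly the sets `A \ {e}` with `A` even in `G`, and `A` is
determined by `A \ {e}`. -/
lemma bijOn_ctr {V α : Type u} (i : α → Sym2 V) {u v : V} (huv : u ≠ v) {e : α}
    (he : i e = s(u, v)) {X : Set α} (heX : e ∉ X) :
    BijOn (fun A : Finset α => A.erase e) (Ev i (insert e X)) (Ev (ctr i u v) X) := by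
  have hm : ∀ w, mult (i e) w = (if w = u then 1 else 0) + (if w = v then 1 else 0) := by
    intro w; rw [he, mult_mk]
  have hmu : mult (i e) u = 1 := by rw [hm]; grind
  refine ⟨?_, ?_, ?_⟩
  · rintro A ⟨hAX, hAne, hA⟩
    refine ⟨?_, ?_, ?_⟩
    · intro x hx
      simp only [Finset.coe_erase, Set.mem_sdiff, Finset.mem_coe, Set.mem_singleton_iff] at hx
      exact (hAX hx.1).resolve_left hx.2
    · rw [Finset.nonempty_iff_ne_empty]
      intro h0
      have hA' : A = {e} := by
        rcases Finset.erase_eq_empty_iff A e |>.1 h0 with h | h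
        · exact absurd h hAne.ne_empty
        · exact h
      have := hA u
      rw [hA', sdeg, Finset.sum_singleton, hmu] at this
      exact absurd this (by decide)
    · intro w
      change Even (sdeg _ (A.erase e) w)
      rw [sdeg_ctr i huv]
      by_cases heA : e ∈ A
      · have h1 := sdeg_erase i heA
        have hu := h1 u; have hv := h1 v; have hw := h1 w
        have := hA u; have := hA v; have := hA w
        rw [hm] at hu hv hw
        grind
      · rw [Finset.erase_eq_of_notMem heA]
        have := hA u; have := hA v; have := hA w
        grind
  · rintro A ⟨-, -, hA⟩ B ⟨-, -, hB⟩ hAB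
    simp only at hAB
    have h1 := hA u
    have h2 := hB u
    by_cases heA : e ∈ A <;> by_cases heB : e ∈ B
    · rw [← Finset.insert_erase heA, hAB, Finset.insert_erase heB]
    · rw [← sdeg_erase i heA, hAB, Finset.erase_eq_of_notMem heB, hmu] at h1
      grind
    · rw [← sdeg_erase i heB, ← hAB, Finset.erase_eq_of_notMem heA, hmu] at h2
      grind
    · rwa [Finset.erase_eq_of_notMem heA, Finset.erase_eq_of_notMem heB] at hAB
  · rintro B ⟨hBX, hBne, hB⟩
    have heB : e ∉ B := fun h => heX (hBX h)
    by_cases hp : Even (sdeg i B u)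
    · refine ⟨B, ⟨hBX.trans (Set.subset_insert _ _), hBne, fun w => ?_⟩,
        Finset.erase_eq_of_notMem heB⟩
      have h1 := hB w
      have h2 := hB u
      rw [sdeg_ctr i huv] at h1 h2
      grind
    · refine ⟨insert e B, ⟨?_, Finset.insert_nonempty _ _, fun w => ?_⟩,
        Finset.erase_insert heB⟩
      · rw [Finset.coe_insert]; exact Set.insert_subset_insert hBX
      rw [sdeg_insert i heB, hm]
      have h1 := hB w
      have h2 := hB u
      rw [sdeg_ctr i huv] at h1 h2
      grind

/-! ### Cycles are the minimal even sets -/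

/-- Induction on the size of the set: contracting an edge `uv` of a minimal even set yields a
smaller minimal even set, in which the merged vertex has degree `d(u) + d(v) - 2 ≤ 2`. -/
lemma sdeg_le_two {V α : Type u} (n : ℕ) : ∀ (i : α → Sym2 V) (A : Finset α), A.card = n →
    Minimal (EvenSet i) A → ∀ v, sdeg i A v ≤ 2 := by
  classical
  induction n with
  | zero =>
    intro i A h0 hA
    exact absurd (Finset.card_eq_zero.1 h0) hA.prop.1.ne_empty
  | succ n ih =>
    intro i A hcard hA w
    obtain ⟨e, heA⟩ := hA.prop.1
    obtain ⟨u, v, he⟩ : ∃ u v, i e = s(u, v) := by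
      induction h : i e with | _ a b => exact ⟨a, b, rfl⟩
    have hm : ∀ w, mult (i e) w = (if w = u then 1 else 0) + (if w = v then 1 else 0) := by
      intro w; rw [he, mult_mk]
    by_cases huv : u = v
    · subst huv
      have hev : EvenSet i {e} := by
        refine ⟨Finset.singleton_nonempty _, fun w => ?_⟩
        rw [sdeg, Finset.sum_singleton, hm]
        exact ⟨_, rfl⟩
      have hAe : A = {e} := hA.eq_of_ge hev (by simpa using heA)
      rw [hAe, sdeg, Finset.sum_singleton, hm]
      grind
    · have hb := bijOn_ctr i huv he (X := (A.erase e : Finset α)) (by simp)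
      have hins : insert e ((A.erase e : Finset α) : Set α) = (A : Set α) := by
        rw [← Finset.coe_insert, Finset.insert_erase heA]
      rw [hins] at hb
      have hmin : Minimal (EvenSet (ctr i u v)) (A.erase e) := by
        refine ⟨(hb.mapsTo ⟨subset_rfl, hA.prop⟩).2, ?_⟩
        intro B hB hBA
        obtain ⟨B', hB', rfl⟩ := hb.surjOn ⟨Finset.coe_subset.2 hBA, hB⟩
        have : A = B' := hA.eq_of_ge hB'.2 (Finset.coe_subset.1 hB'.1)
        subst this
        exact le_rfl
      have hle := ih (ctr i u v) (A.erase e) (by rw [Finset.card_erase_of_mem heA]; omega) hmin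
      have hlu := hle u
      have hlw := hle w
      rw [sdeg_ctr i huv] at hlu hlw
      have hu := sdeg_erase i heA u
      have hv := sdeg_erase i heA v
      have hw := sdeg_erase i heA w
      rw [hm] at hu hv hw
      have eu := hA.prop.2 u
      have ev := hA.prop.2 v
      have ew := hA.prop.2 w
      grind

lemma isCycle_iff {V α : Type u} (G : Graph V α) (C : Set α) :
    G.IsCycle C ↔ ∃ A : Finset α, (A : Set α) = C ∧ C ⊆ G.E ∧ Minimal (EvenSet G.inc) A := by
  classical
  constructor
  · rintro ⟨hCE, hfin, hne, hdeg, hconn⟩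
    obtain ⟨A, rfl⟩ := hfin.exists_finset_coe
    refine ⟨A, rfl, hCE, ⟨by simpa using hne, fun v => ?_⟩, ?_⟩
    · by_cases hv : v ∈ G.vertsOf A
      · rw [← deg_coe, hdeg v hv]; decide
      · have : ¬ 0 < sdeg G.inc A v := fun h => hv ((sdeg_pos_iff _ _ _).1 h)
        rw [Nat.eq_zero_of_not_pos this]; decide
    · rintro B ⟨⟨b, hb⟩, hB⟩ (hBA : B ⊆ A)
      -- at a vertex of `B` the degree in `B` is positive and even, hence equals the degree `2` in `A`
      have key : ∀ v ∈ G.vertsOf B, ∀ x ∈ A, v ∈ G.inc x → x ∈ B := by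
        intro v hv x hx hvx
        by_contra hxB
        have h1 : 0 < sdeg G.inc B v := (sdeg_pos_iff _ _ _).2 hv
        have h2 := sdeg_mono G.inc (Finset.insert_subset hx hBA) v
        rw [sdeg_insert G.inc hxB, ← deg_coe G A, hdeg v ⟨x, hx, hvx⟩] at h2
        have h3 : 0 < mult (G.inc x) v := by unfold mult; simp [hvx]
        have h4 := hB v
        grind
      obtain ⟨v, hv⟩ : ∃ v, v ∈ G.inc b := by
        induction h : G.inc b with | _ p q => exact ⟨p, by simp⟩
      have hreach : ∀ w, Relation.ReflTransGen (G.AdjOn A) v w → w ∈ G.vertsOf B := by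
        intro w hw
        induction hw with
        | refl => exact ⟨b, hb, hv⟩
        | tail _ h ih =>
          obtain ⟨x, hx, hxe⟩ := h
          exact ⟨x, key _ ih x hx (by simp [hxe]), by simp [hxe]⟩
      intro x hx
      obtain ⟨w, hw⟩ : ∃ w, w ∈ G.inc x := by
        induction h : G.inc x with | _ p q => exact ⟨p, by simp⟩
      exact key w (hreach w (hconn v ⟨b, hBA hb, hv⟩ w ⟨x, hx, hw⟩)) x hx hw
  · rintro ⟨A, rfl, hAE, hA⟩
    refine ⟨hAE, A.finite_toSet, by simpa using hA.prop.1, ?_, ?_⟩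
    · intro v hv
      rw [deg_coe]
      have h1 := (sdeg_pos_iff G.inc A v).2 hv
      have h2 := sdeg_le_two _ G.inc A rfl hA v
      have h3 := hA.prop.2 v
      grind
    · intro a ha
      -- the edges of the component of `a` form an even set, hence all of `A`
      let B := A.filter fun x => ∃ w ∈ G.inc x, Relation.ReflTransGen (G.AdjOn A) a w
      have hstep : ∀ x ∈ A, ∀ w ∈ G.inc x, ∀ w' ∈ G.inc x,
          Relation.ReflTransGen (G.AdjOn A) a w → Relation.ReflTransGen (G.AdjOn A) a w' := by
        intro x hx w hw w' hw' h
        by_cases hww : w = w'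
        · rwa [← hww]
        · exact h.tail ⟨x, hx, (Sym2.mem_and_mem_iff hww).1 ⟨hw, hw'⟩⟩
      have hB : EvenSet G.inc B := by
        constructor
        · obtain ⟨x, hx, hax⟩ := ha
          exact ⟨x, Finset.mem_filter.2 ⟨hx, a, hax, .refl⟩⟩
        · intro v
          by_cases hv : Relation.ReflTransGen (G.AdjOn A) a v
          · have : sdeg G.inc B v = sdeg G.inc A v := by
              refine Finset.sum_subset (Finset.filter_subset _ _) fun x hx hxB => ?_
              have hvx : v ∉ G.inc x := fun h => hxB (Finset.mem_filter.2 ⟨hx, v, h, hv⟩)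
              unfold mult
              have : G.inc x ≠ Sym2.diag v := by
                intro h; rw [h] at hvx; simp [Sym2.diag] at hvx
              simp [hvx, this]
            rw [this]; exact hA.prop.2 v
          · have : ¬ 0 < sdeg G.inc B v := by
              rw [sdeg_pos_iff]
              rintro ⟨x, hx, hvx⟩
              obtain ⟨hxA, w, hw, hr⟩ := Finset.mem_filter.1 hx
              exact hv (hstep x hxA w hw v hvx hr)
            rw [Nat.eq_zero_of_not_pos this]; decide
      have hAB : A = B := hA.eq_of_ge hB (Finset.filter_subset _ _)
      rintro b ⟨x, hx, hbx⟩
      have hxB : x ∈ B := hAB ▸ (Finset.mem_coe.1 hx)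
      obtain ⟨hxA, w, hw, hr⟩ := Finset.mem_filter.1 hxB
      exact hstep x hxA w hw b hbx hr

/-- Two distinct cycles exist as soon as two distinct nonempty even sets do: a non-minimal even
set `A` contains a cycle `C` and another one inside `A \ C`. -/
lemma hasTwoCycles_iff {V α : Type u} (G : Graph V α) {X : Set α} (hX : X ⊆ G.E) :
    G.HasTwoCycles X ↔ (Ev G.inc X).Nontrivial := by
  classical
  constructor
  · rintro ⟨C₁, C₂, h1, h2, hne, hs1, hs2⟩
    obtain ⟨A, rfl, -, hA⟩ := (isCycle_iff G _).1 h1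
    obtain ⟨B, rfl, -, hB⟩ := (isCycle_iff G _).1 h2
    exact ⟨A, ⟨hs1, hA.prop⟩, B, ⟨hs2, hB.prop⟩, fun h => hne (by rw [h])⟩
  · have mk : ∀ A B : Finset α, (A : Set α) ⊆ X → (B : Set α) ⊆ X → Minimal (EvenSet G.inc) A →
        Minimal (EvenSet G.inc) B → A ≠ B → G.HasTwoCycles X := fun A B hAX hBX hA hB hne =>
      ⟨A, B, (isCycle_iff G _).2 ⟨A, rfl, hAX.trans hX, hA⟩,
        (isCycle_iff G _).2 ⟨B, rfl, hBX.trans hX, hB⟩, fun h => hne (Finset.coe_injective h),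
        hAX, hBX⟩
    have step : ∀ A ∈ Ev G.inc X, G.HasTwoCycles X ∨ Minimal (EvenSet G.inc) A := by
      rintro A ⟨hAX, hA⟩
      obtain ⟨C, hCA, hC⟩ := exists_minimal_even hA
      by_cases hne : C = A
      · exact .inr (hne ▸ hC)
      · obtain ⟨D, hDA, hD⟩ := exists_minimal_even (hA.sdiff hC.prop hCA hne)
        refine .inl (mk C D ((Finset.coe_subset.2 hCA).trans hAX)
          ((Finset.coe_subset.2 (hDA.trans Finset.sdiff_subset)).trans hAX) hC hD ?_)
        rintro rfl
        obtain ⟨x, hx⟩ := hC.prop.1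
        exact (Finset.mem_sdiff.1 (hDA hx)).2 hx
    rintro ⟨A, hA, B, hB, hne⟩
    rcases step A hA with h | hA'
    · exact h
    rcases step B hB with h | hB'
    · exact h
    exact mk A B hA.1 hB.1 hA' hB' hne

/-! ### Loops -/

lemma nontrivial_insert_loop {V α : Type u} (i : α → Sym2 V) {u : V} {e : α}
    (he : i e = s(u, u)) {X : Set α} (heX : e ∉ X) :
    (Ev i (insert e X)).Nontrivial ↔ (Ev i X).Nonempty := by
  classical
  have hm : ∀ w, Even (mult (i e) w) := fun w => by rw [he, mult_mk]; exact ⟨_, rfl⟩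
  constructor
  · rintro ⟨A, hA, B, hB, hne⟩
    have step : ∀ A ∈ Ev i (insert e X), (Ev i X).Nonempty ∨ A = {e} := by
      rintro A ⟨hAX, hAne, hA⟩
      by_cases h0 : (A.erase e).Nonempty
      · refine .inl ⟨A.erase e, ?_, h0, fun w => ?_⟩
        · intro x hx
          simp only [Finset.coe_erase, Set.mem_sdiff, Finset.mem_coe, Set.mem_singleton_iff] at hx
          exact (hAX hx.1).resolve_left hx.2
        · by_cases heA : e ∈ A
          · have h1 := hA w
            rw [← sdeg_erase i heA, Nat.even_add] at h1
            exact h1.2 (hm w)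
          · rw [Finset.erase_eq_of_notMem heA]; exact hA w
      · rw [Finset.not_nonempty_iff_eq_empty, Finset.erase_eq_empty_iff] at h0
        exact .inr (h0.resolve_left hAne.ne_empty)
    rcases step A hA with h | hA'
    · exact h
    rcases step B hB with h | hB'
    · exact h
    exact absurd (hA'.trans hB'.symm) hne
  · rintro ⟨A, hA⟩
    refine ⟨A, Ev_mono i (Set.subset_insert _ _) hA, {e}, ⟨by simp, by simp, fun w => ?_⟩, ?_⟩
    · rw [sdeg, Finset.sum_singleton]; exact hm w
    · rintro rfl
      exact heX (hA.1 (by simp))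

/-! ### Subdividing an edge -/

open Classical in
/-- The incidence function obtained by subdividing the edge `f` with ends `u` and `v`: the new
vertex is `none`, the edge `f` now joins `u` to it and the edge `e` joins it to `v`. -/
noncomputable def sub {V α : Type u} (i : α → Sym2 V) (e f : α) (u v : V) (x : α) :
    Sym2 (Option V) :=
  if x = f then s(some u, none) else if x = e then s(none, some v) else (i x).map some

open Classical in
lemma sdeg_sub {V α : Type u} (i : α → Sym2 V) {e f : α} (hef : e ≠ f) {u v : V}
    (A : Finset α) (w : Option V) :
    sdeg (sub i e f u v) A w =
      (w.elim 0 fun w => sdeg i ((A.erase e).erase f) w)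
        + (if e ∈ A then (if w = none then 1 else 0) + (if w = some v then 1 else 0) else 0)
        + (if f ∈ A then (if w = some u then 1 else 0) + (if w = none then 1 else 0) else 0) := by
  have h0 : sdeg (sub i e f u v) ((A.erase e).erase f) w =
      w.elim 0 fun w => sdeg i ((A.erase e).erase f) w := by
    have hx : ∀ x ∈ (A.erase e).erase f, mult (sub i e f u v x) w =
        w.elim 0 fun w => mult (i x) w := by
      intro x hx
      have hxf : x ≠ f := by grind
      have hxe : x ≠ e := by grind
      simp only [sub, hxf, hxe, if_false]
      induction i x with | _ a b =>
      cases w <;> simp [mult_mk]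
    unfold sdeg
    rw [Finset.sum_congr rfl hx]
    cases w <;> simp
  have he : mult (sub i e f u v e) w =
      (if w = none then 1 else 0) + (if w = some v then 1 else 0) := by
    simp only [sub, hef, if_false, if_true, mult_mk]
    congr
  have hf : mult (sub i e f u v f) w =
      (if w = some u then 1 else 0) + (if w = none then 1 else 0) := by
    simp only [sub, if_true, mult_mk]
    congr
  rw [← h0, ← he, ← hf]
  have h1 : sdeg (sub i e f u v) A w = sdeg (sub i e f u v) (A.erase e) w +
      (if e ∈ A then mult (sub i e f u v e) w else 0) := by
    split_ifs with h
    · exact (sdeg_erase _ h w).symm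
    · rw [Finset.erase_eq_of_notMem h, add_zero]
  have h2 : sdeg (sub i e f u v) (A.erase e) w =
      sdeg (sub i e f u v) ((A.erase e).erase f) w +
      (if f ∈ A then mult (sub i e f u v f) w else 0) := by
    split_ifs with h
    · exact (sdeg_erase _ (by simp [h, hef.symm]) w).symm
    · rw [Finset.erase_eq_of_notMem (a := f) (by simp [h]), add_zero]
  rw [h1, h2]
  ring

open Classical in
lemma evenSet_sub {V α : Type u} (i : α → Sym2 V) {e f : α} (hef : e ≠ f) {u v : V}
    (hf : i f = s(u, v)) (A : Finset α) :
    EvenSet (sub i e f u v) A ↔ (e ∈ A ↔ f ∈ A) ∧ EvenSet i (A.erase e) := by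
  have hs : ∀ w, sdeg i (A.erase e) w = sdeg i ((A.erase e).erase f) w +
      (if f ∈ A then (if w = u then 1 else 0) + (if w = v then 1 else 0) else 0) := by
    intro w
    by_cases h : f ∈ A
    · rw [← sdeg_erase i (A := A.erase e) (e := f) (by simp [h, hef.symm]) w, hf, mult_mk,
        if_pos h]
    · rw [Finset.erase_eq_of_notMem (a := f) (by simp [h]), if_neg h, add_zero]
  constructor
  · rintro ⟨hne, hA⟩
    have hiff : e ∈ A ↔ f ∈ A := by
      have := hA none
      rw [sdeg_sub i hef] at this
      by_cases h1 : e ∈ A <;> by_cases h2 : f ∈ A <;> simp_all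
    refine ⟨hiff, ?_, fun w => ?_⟩
    · obtain ⟨x, hx⟩ := hne
      by_cases hxe : x = e
      · exact ⟨f, by grind⟩
      · exact ⟨x, by grind⟩
    · have := hA (some w)
      rw [sdeg_sub i hef] at this
      simp only [Option.elim_some, Option.some.injEq, reduceCtorEq, if_false] at this
      rw [hs]
      grind
  · rintro ⟨hiff, hne, hA⟩
    refine ⟨hne.mono (Finset.erase_subset _ _), fun w => ?_⟩
    rw [sdeg_sub i hef]
    cases w with
    | none =>
      simp only [hiff, Option.elim_none, reduceCtorEq, if_true, if_false]
      split_ifs <;> decide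
    | some w =>
      have := hA w
      rw [hs] at this
      simp only [Option.elim_some, Option.some.injEq, reduceCtorEq, if_false]
      grind

open Classical in
/-- Even sets of the subdivided graph inside `X` correspond to even sets of `G`: they use `e` and
`f` together, so `f` is unavailable when `e ∉ X`. -/
lemma bijOn_sub {V α : Type u} (i : α → Sym2 V) {e f : α} (hef : e ≠ f) {u v : V}
    (hf : i f = s(u, v)) (X : Set α) :
    BijOn (fun A : Finset α => A.erase e) (Ev (sub i e f u v) X)
      (Ev i (if e ∈ X then X \ {e} else X \ {f})) := by
  refine ⟨?_, ?_, ?_⟩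
  · rintro A ⟨hAX, hA⟩
    obtain ⟨hiff, hev⟩ := (evenSet_sub i hef hf A).1 hA
    refine ⟨?_, hev⟩
    intro x hx
    have hx' : x ∈ A.erase e := hx
    have hxX : x ∈ X := hAX (Finset.mem_of_mem_erase hx')
    split_ifs with h
    · exact ⟨hxX, Finset.ne_of_mem_erase hx'⟩
    · refine ⟨hxX, ?_⟩
      rintro rfl
      exact h (hAX (hiff.2 (Finset.mem_of_mem_erase hx')))
  · rintro A ⟨-, hA⟩ B ⟨-, hB⟩ hAB
    have h1 := ((evenSet_sub i hef hf A).1 hA).1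
    have h2 := ((evenSet_sub i hef hf B).1 hB).1
    have h3 : ∀ x, x ∈ A.erase e ↔ x ∈ B.erase e := fun x => by
      change A.erase e = B.erase e at hAB
      rw [hAB]
    ext x
    have h4 := h3 f
    have h5 := h3 x
    grind
  · rintro B ⟨hBY, hB⟩
    have heB : e ∉ B := by
      intro h
      have := hBY h
      split_ifs at this with h'
      · exact this.2 rfl
      · exact h' this.1
    have hBX : (B : Set α) ⊆ X := by
      refine hBY.trans ?_
      split_ifs <;> exact Set.sdiff_subset
    by_cases hfB : f ∈ B
    · have heX : e ∈ X := by
        by_contra h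
        have := hBY hfB
        rw [if_neg h] at this
        exact this.2 rfl
      refine ⟨insert e B, ⟨?_, (evenSet_sub i hef hf _).2 ⟨by simp [hfB], ?_⟩⟩,
        Finset.erase_insert heB⟩
      · rw [Finset.coe_insert]; exact Set.insert_subset heX hBX
      · rwa [Finset.erase_insert heB]
    · refine ⟨B, ⟨hBX, (evenSet_sub i hef hf _).2 ⟨by simp [hfB, heB], ?_⟩⟩,
        Finset.erase_eq_of_notMem heB⟩
      rwa [Finset.erase_eq_of_notMem heB]

/-! ### Dependent sets of represented matroids -/

/-- Prescribing the circuits as the minimal sets with a monotone, finitary property `Q` amounts to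
prescribing the dependent sets as the sets with property `Q`. -/
lemma dep_iff_of_circuit_iff {α : Type u} {N : Matroid α} {Q : Set α → Prop}
    (hE : ∀ X, Q X → X ⊆ N.E) (hmono : ∀ X Y, X ⊆ Y → Y ⊆ N.E → Q X → Q Y)
    (hfin : ∀ X, Q X → ∃ Y ⊆ X, Y.Finite ∧ Q Y) :
    (∀ C, Circuit N C ↔ Minimal Q C) ↔ ∀ X, N.Dep X ↔ Q X := by
  constructor
  · intro h X
    constructor
    · intro hX
      obtain ⟨C, hCX, hC⟩ := hX.exists_isCircuit_subset
      exact hmono C X hCX hX.subset_ground ((h C).1 hC).prop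
    · intro hX
      obtain ⟨Y, hYX, hYf, hY⟩ := hfin X hX
      have hfin' : {Z | Z ⊆ Y ∧ Q Z}.Finite := hYf.finite_subsets.subset fun Z hZ => hZ.1
      obtain ⟨C, hC⟩ := hfin'.exists_minimal ⟨Y, subset_rfl, hY⟩
      have hCmin : Minimal Q C :=
        ⟨hC.prop.2, fun D hD hDC => hC.le_of_le ⟨hDC.trans hC.prop.1, hD⟩ hDC⟩
      exact ((h C).2 hCmin).prop.superset (hC.prop.1.trans hYX) (hE X hX)
  · intro h C
    have : N.Dep = Q := funext fun X => propext (h X)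
    rw [Circuit, this]

/-- A set of edges is dependent in `N` exactly when the family of nonempty even subsets of it has
property `T`. For `T` being `Set.Nonempty` this says `N = M(G)`, for `Set.Nontrivial` it says
`N = L(G)`. -/
def Rep {V α : Type u} (T : Set (Finset α) → Prop) (G : Graph V α) (N : Matroid α) : Prop :=
  N.E = G.E ∧ ∀ X, N.Dep X ↔ X ⊆ G.E ∧ T (Ev G.inc X)

lemma minimal_nonempty_iff {V α : Type u} (G : Graph V α) (C : Set α) :
    Minimal (fun X => X ⊆ G.E ∧ (Ev G.inc X).Nonempty) C ↔ G.IsCycle C := by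
  rw [isCycle_iff]
  constructor
  · rintro ⟨⟨hCE, B, hBC, hB⟩, hmin⟩
    obtain ⟨A, hAB, hA⟩ := exists_minimal_even hB
    have hAC : (A : Set α) ⊆ C := (Finset.coe_subset.2 hAB).trans hBC
    exact ⟨A, hAC.antisymm (hmin ⟨hAC.trans hCE, A, subset_rfl, hA.prop⟩ hAC), hCE, hA⟩
  · rintro ⟨A, rfl, hAE, hA⟩
    refine ⟨⟨hAE, A, subset_rfl, hA.prop⟩, ?_⟩
    rintro Y ⟨-, B, hBY, hB⟩ hYA
    have : A = B := hA.eq_of_ge hB (Finset.coe_subset.1 (hBY.trans hYA))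
    subst this
    exact hBY

lemma isGraphicRep_iff {V α : Type u} (G : Graph V α) (N : Matroid α) :
    IsGraphicRep G N ↔ Rep Set.Nonempty G N := by
  unfold IsGraphicRep Rep
  refine and_congr_right fun hE => ?_
  rw [← dep_iff_of_circuit_iff (Q := fun X => X ⊆ G.E ∧ (Ev G.inc X).Nonempty)]
  · simp only [minimal_nonempty_iff]
  · exact fun X hX => hE ▸ hX.1
  · exact fun X Y hXY hY hX => ⟨hE ▸ hY, hX.2.mono (Ev_mono _ hXY)⟩
  · rintro X ⟨hXE, A, hA⟩
    exact ⟨A, hA.1, A.finite_toSet, hA.1.trans hXE, A, subset_rfl, hA.2⟩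

lemma isLiftRep_iff {V α : Type u} (G : Graph V α) (N : Matroid α) :
    IsLiftRep G N ↔ Rep Set.Nontrivial G N := by
  classical
  unfold IsLiftRep Rep
  refine and_congr_right fun hE => ?_
  have hQ : (fun X => X ⊆ G.E ∧ G.HasTwoCycles X) =
      fun X => X ⊆ G.E ∧ (Ev G.inc X).Nontrivial :=
    funext fun X => propext (and_congr_right fun hX => hasTwoCycles_iff G hX)
  rw [← dep_iff_of_circuit_iff (Q := fun X => X ⊆ G.E ∧ (Ev G.inc X).Nontrivial)]
  · simp only [Graph.LiftCircuit, hQ]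
  · exact fun X hX => hE ▸ hX.1
  · exact fun X Y hXY hY hX => ⟨hE ▸ hY, hX.2.mono (Ev_mono _ hXY)⟩
  · rintro X ⟨hXE, A, hA, B, hB, hne⟩
    have hsub : ((A ∪ B : Finset α) : Set α) ⊆ X := by
      rw [Finset.coe_union]; exact Set.union_subset hA.1 hB.1
    exact ⟨(A ∪ B : Finset α), hsub, Finset.finite_toSet _, hsub.trans hXE,
      A, ⟨by simp, hA.2⟩, B, ⟨by simp, hB.2⟩, hne⟩

lemma isGraphic_iff {α : Type u} (N : Matroid α) :
    IsGraphic N ↔ ∃ (V : Type u) (G : Graph V α), Rep Set.Nonempty G N := by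
  simp only [IsGraphic, isGraphicRep_iff]

lemma isBicircularLift_iff {α : Type u} (N : Matroid α) :
    IsBicircularLift N ↔ ∃ (V : Type u) (G : Graph V α), Rep Set.Nontrivial G N := by
  simp only [IsBicircularLift, isLiftRep_iff]

lemma nonempty_bijOn {β : Type u} {s t : Set β} {g : β → β} (h : BijOn g s t) :
    s.Nonempty ↔ t.Nonempty := by
  rw [← h.image_eq, Set.image_nonempty]

lemma nontrivial_bijOn {β : Type u} {s t : Set β} {g : β → β} (h : BijOn g s t) :
    s.Nontrivial ↔ t.Nontrivial := by
  rw [← h.image_eq]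
  exact ⟨fun hs => hs.image_of_injOn h.injOn, Set.nontrivial_of_image g s⟩

/-! ### Contraction and series extension -/

lemma con_dep_iff {α : Type u} {N : Matroid α} {e : α} (he : N.Indep {e}) (X : Set α) :
    (con N {e}).Dep X ↔ e ∉ X ∧ N.Dep (insert e X) := by
  have : con N {e} = N ／ {e} := rfl
  rw [this, he.contract_dep_iff, Set.disjoint_singleton_right, Set.union_singleton]

lemma con_ground {α : Type u} (N : Matroid α) (e : α) : (con N {e}).E = N.E \ {e} := rfl

/-- Contracting an edge that is not a loop of the graph commutes with taking `M(G)` or `L(G)`. -/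
lemma rep_contract {V α : Type u} {T : Set (Finset α) → Prop}
    (hT : ∀ {s t : Set (Finset α)} {g}, BijOn g s t → (T s ↔ T t)) {G : Graph V α}
    {N : Matroid α} {e : α} (he : N.Indep {e}) (hG : Rep T G N) {u v : V} (huv : u ≠ v)
    (hinc : G.inc e = s(u, v)) : Rep T ⟨G.E \ {e}, ctr G.inc u v⟩ (con N {e}) := by
  have heE : e ∈ G.E := hG.1 ▸ he.subset_ground rfl
  refine ⟨by rw [con_ground, hG.1], fun X => ?_⟩
  rw [con_dep_iff he, hG.2, Set.subset_sdiff, Set.disjoint_singleton_right, Set.insert_subset_iff]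
  constructor
  · rintro ⟨heX, ⟨-, hXE⟩, h⟩
    exact ⟨⟨hXE, heX⟩, (hT (bijOn_ctr G.inc huv hinc heX)).1 h⟩
  · rintro ⟨⟨hXE, heX⟩, h⟩
    exact ⟨heX, ⟨heE, hXE⟩, (hT (bijOn_ctr G.inc huv hinc heX)).2 h⟩

/-- Contracting a loop `e` of `G` turns `L(G)` into the graphic matroid `M(G \ e)`. -/
lemma rep_contract_loop {V α : Type u} {G : Graph V α} {N : Matroid α} {e : α}
    (he : N.Indep {e}) (hG : Rep Set.Nontrivial G N) {u : V} (hinc : G.inc e = s(u, u)) :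
    Rep Set.Nonempty (G.delete {e}) (con N {e}) := by
  have heE : e ∈ G.E := hG.1 ▸ he.subset_ground rfl
  refine ⟨by rw [con_ground, hG.1, Graph.delete], fun X => ?_⟩
  simp only [Graph.delete]
  rw [con_dep_iff he, hG.2, Set.subset_sdiff, Set.disjoint_singleton_right, Set.insert_subset_iff]
  constructor
  · rintro ⟨heX, ⟨-, hXE⟩, h⟩
    exact ⟨⟨hXE, heX⟩, (nontrivial_insert_loop G.inc hinc heX).1 h⟩
  · rintro ⟨⟨hXE, heX⟩, h⟩
    exact ⟨heX, ⟨heE, hXE⟩, (nontrivial_insert_loop G.inc hinc heX).2 h⟩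

lemma SeriesPair.indep {α : Type u} {N : Matroid α} {e f : α} (hef : e ≠ f)
    (h : SeriesPair N e f) : N.Indep {e} := by
  obtain ⟨C, hC, he, hf⟩ := h.2
  have hC' : N.IsCircuit C := hC
  refine hC'.ssubset_indep ⟨by simpa using he, fun hs => hef ?_⟩
  exact (hs hf).symm

open Classical in
/-- Recovers the dependent sets of `N` from those of `N / e`: if `e ∉ X`, then no circuit
contained in `X` uses `f`, so `f` may be dropped from `X`. -/
lemma SeriesPair.dep_iff {α : Type u} {N : Matroid α} {e f : α} (hef : e ≠ f)
    (h : SeriesPair N e f) {X : Set α} (hX : X ⊆ N.E) :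
    N.Dep X ↔ (con N {e}).Dep (if e ∈ X then X \ {e} else X \ {f}) := by
  have hi := h.indep hef
  have heE : e ∈ N.E := hi.subset_ground rfl
  rw [con_dep_iff hi]
  split_ifs with he
  · simp [Set.insert_eq_of_mem he]
  · constructor
    · intro hd
      obtain ⟨C, hCX, hC⟩ := hd.exists_isCircuit_subset
      have hfC : f ∉ C := fun hf => he (hCX ((h.1 C hC).2 hf))
      refine ⟨fun h' => he h'.1, hC.dep.superset ?_
        (Set.insert_subset heE (Set.sdiff_subset.trans hX))⟩
      intro x hx
      exact .inr ⟨hCX hx, fun hxf => hfC (hxf ▸ hx)⟩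
    · rintro ⟨-, hd⟩
      obtain ⟨C, hCX, hC⟩ := hd.exists_isCircuit_subset
      have hfC : f ∉ C := by
        intro hf
        rcases hCX hf with h' | h'
        · exact hef h'.symm
        · exact h'.2 rfl
      have heC : e ∉ C := fun h' => hfC ((h.1 C hC).1 h')
      refine hC.dep.superset (fun x hx => ?_) hX
      rcases hCX hx with h' | h'
      · exact absurd (h' ▸ hx) heC
      · exact h'.1

/-- If `G` represents `N / e`, then subdividing `f` in `G` gives a representation of `N`. -/
lemma rep_subdivide {V α : Type u} {T : Set (Finset α) → Prop}
    (hT : ∀ {s t : Set (Finset α)} {g}, BijOn g s t → (T s ↔ T t)) {G : Graph V α}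
    {N : Matroid α} {e f : α} (hef : e ≠ f) (h : SeriesPair N e f) (hG : Rep T G (con N {e})) :
    ∃ G' : Graph (Option V) α, Rep T G' N := by
  classical
  obtain ⟨u, v, hinc⟩ : ∃ u v, G.inc f = s(u, v) := by
    induction h : G.inc f with | _ a b => exact ⟨a, b, rfl⟩
  refine ⟨⟨N.E, sub G.inc e f u v⟩, rfl, fun X => ?_⟩
  have key : X ⊆ N.E → (N.Dep X ↔ T (Ev (sub G.inc e f u v) X)) := by
    intro hX
    rw [h.dep_iff hef hX, hG.2, hT (bijOn_sub G.inc hef hinc X), and_iff_right]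
    rw [← hG.1, con_ground]
    split_ifs with he
    · exact Set.sdiff_subset_sdiff_left hX
    · exact fun x hx => ⟨hX hx.1, fun hxe => he (hxe ▸ hx.1)⟩
  exact ⟨fun hd => ⟨hd.subset_ground, (key hd.subset_ground).1 hd⟩, fun hd => (key hd.1).2 hd.2⟩

theorem statement_7 {α : Type u} (N : Matroid α) (e f : α) (hef : e ≠ f)
    (h : SeriesPair N e f) : InBL (con N {e}) ↔ InBL N := by
  have hi := h.indep hef
  unfold InBL
  simp only [isGraphic_iff, isBicircularLift_iff]
  constructor
  · rintro (⟨V, G, hG⟩ | ⟨V, G, hG⟩)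
    · exact .inl ⟨_, rep_subdivide nonempty_bijOn hef h hG⟩
    · exact .inr ⟨_, rep_subdivide nontrivial_bijOn hef h hG⟩
  · rintro (⟨V, G, hG⟩ | ⟨V, G, hG⟩)
    all_goals
      obtain ⟨u, v, hinc⟩ : ∃ u v, G.inc e = s(u, v) := by
        induction h : G.inc e with | _ a b => exact ⟨a, b, rfl⟩
    · refine .inl ⟨V, _, rep_contract nonempty_bijOn hi hG ?_ hinc⟩
      -- a loop of `G` would be a loop of `N = M(G)`
      rintro rfl
      refine hi.not_dep ((hG.2 _).2 ⟨hG.1 ▸ hi.subset_ground, {e}, by simp, by simp, fun w => ?_⟩)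
      rw [sdeg, Finset.sum_singleton, hinc, mult_mk]
      exact ⟨_, rfl⟩
    · by_cases huv : u = v
      · subst huv
        exact .inl ⟨V, _, rep_contract_loop hi hG hinc⟩
      · exact .inr ⟨V, _, rep_contract nontrivial_bijOn hi hG huv hinc⟩

end BLFormal
end

section
/- For every subdivision H of the complete graph K_4, the cycle matroid M(H) is not a bicircular lift matroid. In particular, M(K_4) is not bicircular lift. -/
/-!
Why `M(H)` is not a bicircular lift matroid for a subdivision `H` of `K₄`.

Suppose `M(H) = L(G)`. Each edge of `K₄` becomes a path of `H`. Take two triangles of `K₄` sharing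
an edge `p`, let `A` and `B` be the corresponding cycles of `H`, and let `P = A ∩ B` be the path
replacing `p`. As circuits of `L(G)`, both `A` and `B` contain two cycles of `G`, so their binary
cycle spaces in `G` have dimension at least two. If `P` contained no cycle of `G`, these spaces
would meet trivially and the cycle space of `A ∪ B` in `G` would have dimension at least four;
deleting two edges of `A ∪ B` would leave dimension at least two, hence two cycles of `G`
(`Graph.hasTwoCycles_of_union`). But `A ∪ B` is a theta subgraph of `H`, so deleting an edge of
each of two of its three paths leaves a set independent in `M(H)`, a contradiction. Hence `P`
contains a cycle of `G`. The same holds for the path `Q` replacing the edge opposite to `p`, so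
`P ∪ Q` contains two cycles of `G` and is dependent in `L(G)`, while it contains no cycle of `H`
(`not_lift_of_label`).

Cycles are handled through the cycle space over `GF(2)`: indicator vectors of cycles have zero
boundary (`Graph.exists_bd_of_cycle`), and the support of a nonzero vector with zero boundary
contains a cycle (`Graph.exists_cycle_of_bd`). The cycle space of `H` is described by a labelling
of the edges by vectors of `GF(2)³` (`K4Label`), which exists for `K₄` (`exists_label_K4`) and is
inherited under subdivision (`exists_label_of_elemSub`).
-/

open Set Matroid

universe u

namespace BLFormal

/-! ### Edge counting and cycles in finite edge sets -/

namespace Graph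

variable {V α : Type u}

open Classical in
/-- The contribution of the edge `e` to the degree of the vertex `v` : the number of
ends of `e` at `v`. -/
noncomputable def ends (G : Graph V α) (e : α) (v : V) : ℕ :=
  (if v ∈ G.inc e then 1 else 0) + (if G.inc e = Sym2.diag v then 1 else 0)

open Classical in
lemma ends_eq (G : Graph V α) {e : α} {a b : V} (h : G.inc e = s(a, b)) (v : V) :
    G.ends e v = (if v = a then 1 else 0) + (if v = b then 1 else 0) := by
  have hd : (s(a, b) = Sym2.diag v) ↔ (a = v ∧ b = v) := by
    simp [Sym2.diag]
  simp only [ends, h, hd, Sym2.mem_iff]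
  by_cases h1 : v = a <;> by_cases h2 : v = b <;> simp_all [eq_comm]

lemma ends_eq_zero (G : Graph V α) {e : α} {v : V} (h : v ∉ G.inc e) : G.ends e v = 0 := by
  have : G.inc e ≠ Sym2.diag v := by
    intro h'
    apply h
    simp [h', Sym2.diag]
  simp [ends, h, this]

lemma deg_eq_sum (G : Graph V α) (C : Finset α) (v : V) :
    G.deg (C : Set α) v = ∑ e ∈ C, G.ends e v := by
  classical
  have h1 : {e ∈ (C : Set α) | v ∈ G.inc e} = (C.filter (fun e => v ∈ G.inc e) : Finset α) := by
    ext; simp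
  have h2 : {e ∈ (C : Set α) | G.inc e = Sym2.diag v} =
      (C.filter (fun e => G.inc e = Sym2.diag v) : Finset α) := by
    ext; simp
  simp only [deg, h1, h2, Set.ncard_coe_finset, ends, Finset.sum_add_distrib,
    Finset.card_filter]

open Classical in
/-- The finite set of vertices incident with a finite edge set. -/
noncomputable def vs (G : Graph V α) (C : Finset α) : Finset V :=
  C.biUnion fun e => (G.inc e).toFinset

lemma mem_vs (G : Graph V α) {C : Finset α} {v : V} :
    v ∈ G.vs C ↔ ∃ e ∈ C, v ∈ G.inc e := by
  classical
  simp [vs]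

lemma vs_mono (G : Graph V α) {C D : Finset α} (h : C ⊆ D) : G.vs C ⊆ G.vs D := by
  intro v hv
  obtain ⟨e, he, hv⟩ := G.mem_vs.1 hv
  exact G.mem_vs.2 ⟨e, h he, hv⟩

lemma handshake (G : Graph V α) (C : Finset α) :
    ∑ v ∈ G.vs C, G.deg (C : Set α) v = 2 * C.card := by
  classical
  simp only [deg_eq_sum]
  rw [Finset.sum_comm, Finset.sum_const_nat (m := 2), mul_comm]
  intro e he
  obtain ⟨a, b, hab⟩ : ∃ a b, G.inc e = s(a, b) := by
    induction h : G.inc e with | _ a b => exact ⟨a, b, rfl⟩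
  have ha : a ∈ G.vs C := G.mem_vs.2 ⟨e, he, by simp [hab]⟩
  have hb : b ∈ G.vs C := G.mem_vs.2 ⟨e, he, by simp [hab]⟩
  simp [G.ends_eq hab, Finset.sum_add_distrib, ha, hb]

/-- A nonempty finite edge set that is minimal among those with at least as many edges as
vertices is a cycle: minimality forces equality of the two counts, minimum degree two and
connectedness, and the handshake identity then makes every degree equal to two. -/
lemma isCycle_of_minimal (G : Graph V α) {C : Finset α} (hE : (C : Set α) ⊆ G.E)
    (hne : C.Nonempty) (hcard : (G.vs C).card ≤ C.card)
    (hmin : ∀ D ⊆ C, D.Nonempty → (G.vs D).card ≤ D.card → D = C) : G.IsCycle C := by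
  classical
  have hle : C.card ≤ (G.vs C).card := by
    obtain ⟨e, he⟩ := hne
    by_contra! hlt
    have hpos : 0 < (G.vs C).card := by
      refine Finset.card_pos.2 ⟨(G.inc e).out.1, G.mem_vs.2 ⟨e, he, Sym2.out_fst_mem _⟩⟩
    have hce := Finset.card_erase_of_mem he
    have h1 := hmin (C.erase e) (Finset.erase_subset _ _)
      (Finset.card_pos.1 (by omega))
      ((Finset.card_le_card (G.vs_mono (Finset.erase_subset e C))).trans (by omega))
    rw [← h1] at he
    simp at he
  have htwo : ∀ v ∈ G.vs C, 2 ≤ G.deg (C : Set α) v := by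
    intro v hv
    obtain ⟨e, he, hve⟩ := G.mem_vs.1 hv
    have hone : ∀ e', v ∈ G.inc e' → 1 ≤ G.ends e' v := by
      intro e' h; simp [ends, h]
    rw [deg_eq_sum]
    by_cases hother : ∃ e' ∈ C, e' ≠ e ∧ v ∈ G.inc e'
    · obtain ⟨e', he', hne', hve'⟩ := hother
      have hsub : ({e, e'} : Finset α) ⊆ C := by
        intro x; simp only [Finset.mem_insert, Finset.mem_singleton]
        rintro (rfl | rfl) <;> assumption
      calc 2 ≤ G.ends e v + G.ends e' v := by have := hone e hve; have := hone e' hve'; omega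
        _ = ∑ x ∈ ({e, e'} : Finset α), G.ends x v := by rw [Finset.sum_pair hne'.symm]
        _ ≤ _ := Finset.sum_le_sum_of_subset hsub
    · push Not at hother
      by_cases hs : C = {e}
      · -- a single edge is a loop, since it has at most one vertex
        obtain ⟨b, hb⟩ : ∃ b, G.inc e = s(v, b) := Sym2.mem_iff_exists.1 hve
        have hvb : b = v := by
          by_contra hbv
          have : ({v, b} : Finset V) ⊆ G.vs C := by
            intro x; simp only [Finset.mem_insert, Finset.mem_singleton]
            rintro (rfl | rfl) <;> exact G.mem_vs.2 ⟨e, he, by simp [hb]⟩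
          have := Finset.card_le_card this
          rw [Finset.card_pair (Ne.symm hbv)] at this
          simp [hs] at hcard this
          omega
        subst hvb
        simp [hs, G.ends_eq hb]
      · exfalso
        have hce := Finset.card_erase_of_mem he
        have hne' : (C.erase e).Nonempty := by
          rw [Finset.nonempty_iff_ne_empty]
          intro h
          rw [Finset.erase_eq_empty_iff] at h
          rcases h with h | h
          · simp [h] at he
          · exact hs h
        have hsub : G.vs (C.erase e) ⊆ (G.vs C).erase v := by
          intro x hx
          obtain ⟨e', he', hxe'⟩ := G.mem_vs.1 hx
          rw [Finset.mem_erase] at he' ⊢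
          refine ⟨?_, G.mem_vs.2 ⟨e', he'.2, hxe'⟩⟩
          rintro rfl
          exact hother e' he'.2 he'.1 hxe'
        have := Finset.card_le_card hsub
        rw [Finset.card_erase_of_mem hv] at this
        have h1 := hmin (C.erase e) (Finset.erase_subset _ _) hne' (by omega)
        rw [← h1] at he
        simp at he
  have hvs : ∀ v, v ∈ G.vertsOf (C : Set α) ↔ v ∈ G.vs C := by
    intro v; simp [vertsOf, mem_vs]
  refine ⟨hE, C.finite_toSet, by simpa using hne, ?_, ?_⟩
  · intro v hv
    rw [hvs] at hv
    have hsum : ∑ v ∈ G.vs C, 2 = ∑ v ∈ G.vs C, G.deg (C : Set α) v := by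
      apply le_antisymm (Finset.sum_le_sum htwo)
      rw [handshake]; simp; omega
    exact ((Finset.sum_eq_sum_iff_of_le htwo).1 hsum v hv).symm
  · intro u hu v hv
    rw [hvs] at hu hv
    -- the edges of the component of `u`
    set D := C.filter (fun e => ∃ a ∈ G.inc e, Relation.ReflTransGen (G.AdjOn (C : Set α)) u a)
      with hD
    have hclosed : ∀ e ∈ C, ∀ a ∈ G.inc e, ∀ b ∈ G.inc e,
        Relation.ReflTransGen (G.AdjOn (C : Set α)) u a →
        Relation.ReflTransGen (G.AdjOn (C : Set α)) u b := by
      intro e he a ha b hb hua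
      by_cases hab : a = b
      · exact hab ▸ hua
      · exact hua.tail ⟨e, he, (Sym2.mem_and_mem_iff hab).1 ⟨ha, hb⟩⟩
    have hDC : D ⊆ C := Finset.filter_subset _ _
    have hDne : D.Nonempty := by
      obtain ⟨e, he, hue⟩ := G.mem_vs.1 hu
      exact ⟨e, Finset.mem_filter.2 ⟨he, u, hue, .refl⟩⟩
    have hdisj : Disjoint (G.vs D) (G.vs (C \ D)) := by
      rw [Finset.disjoint_left]
      intro x hx hx'
      obtain ⟨e, he, hxe⟩ := G.mem_vs.1 hx
      obtain ⟨e', he', hxe'⟩ := G.mem_vs.1 hx'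
      obtain ⟨heC, a, ha, hua⟩ := Finset.mem_filter.1 he
      rw [Finset.mem_sdiff] at he'
      exact he'.2 (Finset.mem_filter.2 ⟨he'.1, x, hxe', hclosed e heC a ha x hxe hua⟩)
    have hsum : (G.vs D).card + (G.vs (C \ D)).card ≤ D.card + (C \ D).card := by
      rw [← Finset.card_union_of_disjoint hdisj, add_comm D.card,
        Finset.card_sdiff_add_card_eq_card hDC]
      exact (Finset.card_le_card
        (Finset.union_subset (G.vs_mono hDC) (G.vs_mono Finset.sdiff_subset))).trans hcard
    have hDeq : D = C := by
      by_cases h : (G.vs D).card ≤ D.card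
      · exact hmin D hDC hDne h
      · exfalso
        have h1 := hmin (C \ D) Finset.sdiff_subset (Finset.card_pos.1 (by omega)) (by omega)
        obtain ⟨e, he⟩ := hDne
        have : e ∈ C \ D := h1.ge (hDC he)
        exact (Finset.mem_sdiff.1 this).2 he
    obtain ⟨e, he, hve⟩ := G.mem_vs.1 hv
    rw [← hDeq] at he
    obtain ⟨heC, a, ha, hua⟩ := Finset.mem_filter.1 he
    exact hclosed e heC a ha v hve hua

/-- A nonempty finite edge set with all degrees even contains a cycle. -/
lemma exists_cycle_of_even (G : Graph V α) {C : Finset α} (hE : (C : Set α) ⊆ G.E)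
    (hne : C.Nonempty) (heven : ∀ v, Even (G.deg (C : Set α) v)) :
    ∃ D : Set α, G.IsCycle D ∧ D ⊆ C := by
  classical
  have hcard : (G.vs C).card ≤ C.card := by
    have h2 : ∀ v ∈ G.vs C, 2 ≤ G.deg (C : Set α) v := by
      intro v hv
      obtain ⟨e, he, hve⟩ := G.mem_vs.1 hv
      have : 0 < G.deg (C : Set α) v := by
        rw [deg_eq_sum]
        refine Finset.sum_pos' (fun _ _ => Nat.zero_le _) ⟨e, he, by simp [ends, hve]⟩
      obtain ⟨k, hk⟩ := heven v
      omega
    have := Finset.sum_le_sum h2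
    rw [handshake] at this
    simp at this
    omega
  obtain ⟨D, hDC, hD⟩ := exists_minimal_le_of_wellFoundedLT
    (fun D : Finset α => D.Nonempty ∧ (G.vs D).card ≤ D.card) C ⟨hne, hcard⟩
  refine ⟨D, G.isCycle_of_minimal ((Finset.coe_subset.2 hDC).trans hE) hD.prop.1 hD.prop.2 ?_,
    Finset.coe_subset.2 hDC⟩
  intro D' hD' h1 h2
  exact hD.eq_of_le ⟨h1, h2⟩ hD'

/-! ### The binary cycle space -/

/-- The boundary map over `GF(2)`, sending an edge to the vector of its incidences. -/
noncomputable def bd (G : Graph V α) : (α →₀ ZMod 2) →ₗ[ZMod 2] (V → ZMod 2) :=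
  Finsupp.linearCombination (ZMod 2) (fun e v => (G.ends e v : ZMod 2))

lemma bd_single (G : Graph V α) (e : α) (c : ZMod 2) (v : V) :
    G.bd (Finsupp.single e c) v = c * (G.ends e v : ZMod 2) := by
  simp [bd]

lemma bd_apply (G : Graph V α) (x : α →₀ ZMod 2) (v : V) :
    G.bd x v = ∑ e ∈ x.support, x e * (G.ends e v : ZMod 2) := by
  simp [bd, Finsupp.linearCombination_apply, Finsupp.sum]

lemma bd_apply_eq_deg (G : Graph V α) (x : α →₀ ZMod 2) (v : V) :
    G.bd x v = (G.deg (x.support : Set α) v : ZMod 2) := by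
  rw [bd_apply, deg_eq_sum, Nat.cast_sum]
  refine Finset.sum_congr rfl fun e he => ?_
  rw [Finsupp.mem_support_iff] at he
  have : ∀ c : ZMod 2, c ≠ 0 → c = 1 := by decide
  rw [this _ he, one_mul]

/-- The support of a nonzero vector of the cycle space contains a cycle. -/
lemma exists_cycle_of_bd (G : Graph V α) {x : α →₀ ZMod 2} (hx : x ≠ 0) (hb : G.bd x = 0)
    (hE : (x.support : Set α) ⊆ G.E) : ∃ D : Set α, G.IsCycle D ∧ D ⊆ x.support := by
  refine G.exists_cycle_of_even hE (Finsupp.support_nonempty_iff.2 hx) fun v => ?_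
  rw [← ZMod.natCast_eq_zero_iff_even, ← bd_apply_eq_deg, hb]
  rfl

/-- The indicator vector of a cycle lies in the cycle space. -/
lemma exists_bd_of_cycle (G : Graph V α) {C : Set α} (hC : G.IsCycle C) :
    ∃ x : α →₀ ZMod 2, (x.support : Set α) = C ∧ G.bd x = 0 := by
  classical
  obtain ⟨hE, hfin, hne, hdeg, -⟩ := hC
  have hs : ((Finsupp.indicator hfin.toFinset (fun _ _ => (1 : ZMod 2))).support : Set α) = C := by
    ext e; simp [Finsupp.indicator_apply]
  refine ⟨_, hs, ?_⟩
  funext v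
  rw [bd_apply_eq_deg, hs]
  by_cases hv : v ∈ G.vertsOf C
  · rw [hdeg v hv]; rfl
  · have h0 : ∀ e ∈ C, v ∉ G.inc e := fun e he h => hv ⟨e, he, h⟩
    have := G.deg_eq_sum hfin.toFinset v
    rw [Finset.sum_eq_zero (fun e he => G.ends_eq_zero (h0 e (by simpa using he)))] at this
    simp at this
    simp [this]

/-- If `A` and `B` both contain two cycles but `A ∩ B` contains none, then the cycle space of
`A ∪ B` has dimension at least four, so deleting any two edges leaves two cycles. -/
lemma hasTwoCycles_of_union (G : Graph V α) {A B : Set α} (hA : G.HasTwoCycles A)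
    (hB : G.HasTwoCycles B) (hAB : ¬ ∃ D, G.IsCycle D ∧ D ⊆ A ∩ B) (e f : α) :
    G.HasTwoCycles ((A ∪ B) \ {e, f}) := by
  classical
  obtain ⟨C₁, C₂, hC₁, hC₂, hC, hC₁A, hC₂A⟩ := hA
  obtain ⟨D₁, D₂, hD₁, hD₂, hD, hD₁B, hD₂B⟩ := hB
  obtain ⟨c₁, hc₁, bc₁⟩ := G.exists_bd_of_cycle hC₁
  obtain ⟨c₂, hc₂, bc₂⟩ := G.exists_bd_of_cycle hC₂
  obtain ⟨d₁, hd₁, bd₁⟩ := G.exists_bd_of_cycle hD₁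
  obtain ⟨d₂, hd₂, bd₂⟩ := G.exists_bd_of_cycle hD₂
  have mem : ∀ {c : α →₀ ZMod 2} {C : Set α}, (c.support : Set α) = C → ∀ a, a ∉ C → c a = 0 := by
    intro c C h a ha
    by_contra hne
    exact ha (h ▸ (by simpa using hne))
  -- distinct nonempty supports give independent vectors over `GF(2)`
  have indep : ∀ {x y : α →₀ ZMod 2} {X Y : Set α}, (x.support : Set α) = X →
      (y.support : Set α) = Y → X.Nonempty → Y.Nonempty → X ≠ Y → ∀ s t : ZMod 2,
      s • x + t • y = 0 → s = 0 ∧ t = 0 := by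
    intro x y X Y hx hy hX hY hXY s t h
    have h01 : ∀ c : ZMod 2, c = 0 ∨ c = 1 := by decide
    have hx0 : x ≠ 0 := by rintro rfl; simp [← hx] at hX
    have hy0 : y ≠ 0 := by rintro rfl; simp [← hy] at hY
    have hxy : x + y ≠ 0 := by
      intro h
      have : x = y := by
        have h2 : y = -y := by
          ext a
          have : ∀ c : ZMod 2, c = -c := by decide
          exact this _
        rw [h2]; exact eq_neg_of_add_eq_zero_left h
      exact hXY (by rw [← hx, ← hy, this])
    rcases h01 s with rfl | rfl <;> rcases h01 t with rfl | rfl <;> simp_all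
  let comb : (Fin 4 → ZMod 2) →ₗ[ZMod 2] (α →₀ ZMod 2) :=
    Fintype.linearCombination (ZMod 2) ![c₁, c₂, d₁, d₂]
  have comb_apply : ∀ t, comb t = (t 0 • c₁ + t 1 • c₂) + (t 2 • d₁ + t 3 • d₂) := by
    intro t
    simp [comb, Fintype.linearCombination_apply, Fin.sum_univ_four, add_assoc]
  have comb_bd : ∀ t, G.bd (comb t) = 0 := by
    intro t; rw [comb_apply]; simp [bc₁, bc₂, bd₁, bd₂]
  have hc_off : ∀ (s t : ZMod 2) (a : α), a ∉ A → (s • c₁ + t • c₂) a = 0 := by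
    intro s t a ha
    simp [mem hc₁ a (fun h => ha (hC₁A h)), mem hc₂ a (fun h => ha (hC₂A h))]
  have hd_off : ∀ (s t : ZMod 2) (a : α), a ∉ B → (s • d₁ + t • d₂) a = 0 := by
    intro s t a ha
    simp [mem hd₁ a (fun h => ha (hD₁B h)), mem hd₂ a (fun h => ha (hD₂B h))]
  have hc_E : ∀ (s t : ZMod 2) (a : α), a ∉ G.E → (s • c₁ + t • c₂) a = 0 := by
    intro s t a ha
    simp [mem hc₁ a (fun h => ha (hC₁.1 h)), mem hc₂ a (fun h => ha (hC₂.1 h))]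
  have hd_E : ∀ (s t : ZMod 2) (a : α), a ∉ G.E → (s • d₁ + t • d₂) a = 0 := by
    intro s t a ha
    simp [mem hd₁ a (fun h => ha (hD₁.1 h)), mem hd₂ a (fun h => ha (hD₂.1 h))]
  have comb_inj : ∀ t, comb t = 0 → t = 0 := by
    intro t ht
    rw [comb_apply] at ht
    have hz : t 0 • c₁ + t 1 • c₂ = 0 := by
      by_contra hne
      -- the common value is supported in `A ∩ B`
      obtain ⟨D, hD, hDs⟩ := G.exists_cycle_of_bd hne (by simp [bc₁, bc₂]) (by
        intro a ha
        by_contra haE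
        exact (Finsupp.mem_support_iff.1 ha) (hc_E _ _ a haE))
      refine hAB ⟨D, hD, fun a ha => ?_⟩
      have h1 := Finsupp.mem_support_iff.1 (hDs ha)
      constructor
      · by_contra haA
        exact h1 (hc_off _ _ a haA)
      · by_contra haB
        have h2 := DFunLike.congr_fun ht a
        rw [Finsupp.add_apply, hd_off _ _ a haB, add_zero] at h2
        exact h1 h2
    have hz' : t 2 • d₁ + t 3 • d₂ = 0 := by rwa [hz, zero_add] at ht
    obtain ⟨h0, h1⟩ := indep hc₁ hc₂ hC₁.2.2.1 hC₂.2.2.1 hC _ _ hz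
    obtain ⟨h2, h3⟩ := indep hd₁ hd₂ hD₁.2.2.1 hD₂.2.2.1 hD _ _ hz'
    funext i
    fin_cases i <;> assumption
  have key : ∀ g : α, ∃ D, G.IsCycle D ∧ D ⊆ A ∪ B ∧ e ∉ D ∧ f ∉ D ∧ g ∉ D := by
    intro g
    -- three linear conditions on a four-dimensional space
    let ev : (Fin 4 → ZMod 2) →ₗ[ZMod 2] (Fin 3 → ZMod 2) :=
      LinearMap.pi ![Finsupp.lapply e, Finsupp.lapply f, Finsupp.lapply g] ∘ₗ comb
    obtain ⟨t, ht, ht0⟩ := (Submodule.ne_bot_iff _).1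
      (LinearMap.ker_ne_bot_of_finrank_lt (f := ev) (by simp))
    have hev : ∀ i, ev t i = 0 := fun i => congrFun (LinearMap.mem_ker.1 ht) i
    have he : comb t e = 0 := hev 0
    have hf : comb t f = 0 := hev 1
    have hg : comb t g = 0 := hev 2
    obtain ⟨D, hD, hDs⟩ := G.exists_cycle_of_bd (fun h => ht0 (comb_inj t h)) (comb_bd t) (by
      intro a ha
      by_contra haE
      refine (Finsupp.mem_support_iff.1 ha) ?_
      rw [comb_apply, Finsupp.add_apply, hc_E _ _ a haE, hd_E _ _ a haE, add_zero])
    have hDs' : ∀ a ∈ D, comb t a ≠ 0 := fun a ha => Finsupp.mem_support_iff.1 (hDs ha)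
    refine ⟨D, hD, fun a ha => ?_, fun h => hDs' _ h he, fun h => hDs' _ h hf,
      fun h => hDs' _ h hg⟩
    by_contra hab
    rw [Set.mem_union, not_or] at hab
    refine hDs' a ha ?_
    rw [comb_apply, Finsupp.add_apply, hc_off _ _ a hab.1, hd_off _ _ a hab.2, add_zero]
  obtain ⟨D, hD, hDs, heD, hfD, -⟩ := key e
  obtain ⟨g, hg⟩ := hD.2.2.1
  obtain ⟨D', hD', hDs', heD', hfD', hgD'⟩ := key g
  have sub : ∀ {X : Set α}, X ⊆ A ∪ B → e ∉ X → f ∉ X → X ⊆ (A ∪ B) \ {e, f} := by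
    intro X h he hf a ha
    refine ⟨h ha, ?_⟩
    rintro (rfl | rfl)
    · exact he ha
    · exact hf ha
  exact ⟨D, D', hD, hD', fun h => hgD' (h ▸ hg), sub hDs heD hfD, sub hDs' heD' hfD'⟩

end Graph

/-! ### The cycle space of a subdivision of `K₄` -/

open Matrix in
/-- `lam` labels the edges of `H` by vectors of `GF(2)³` so that the cycle space of `H` consists
of the vectors `e ↦ ⟨lam e, t⟩` with `t ∈ GF(2)³`; every nonzero vector other than `(1, 1, 1)`
occurs as a label, and `(1, 1, 1)` does not. In other words, `lam` represents the dual of `M(H)`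
over `GF(2)`, and this dual is `M(K₄)` up to loops and parallel elements. -/
structure K4Label {V α : Type u} (H : Graph V α) (lam : α → Fin 3 → ZMod 2) : Prop where
  fin : H.E.Finite
  surj : ∀ v : Fin 3 → ZMod 2, v ≠ 0 → v ≠ ![1, 1, 1] → ∃ e ∈ H.E, lam e = v
  ne_ones : ∀ e ∈ H.E, lam e ≠ ![1, 1, 1]
  cyc : ∀ x : α →₀ ZMod 2, (∀ a, a ∉ H.E → x a = 0) →
    (H.bd x = 0 ↔ ∃ t : Fin 3 → ZMod 2, ∀ e ∈ H.E, x e = lam e ⬝ᵥ t)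

/-- First ends of the six edges `01, 02, 12, 03, 13, 23` of `K₄`. -/
def k4Fst : Fin 6 → Fin 4 := ![0, 0, 1, 0, 1, 2]

/-- Second ends of the six edges `01, 02, 12, 03, 13, 23` of `K₄`. -/
def k4Snd : Fin 6 → Fin 4 := ![1, 2, 2, 3, 3, 3]

/-- Labels of the six edges of `K₄`; the edges of each star have labels summing to zero. -/
def k4Lab : Fin 6 → Fin 3 → ZMod 2 :=
  ![![1, 0, 0], ![0, 1, 0], ![0, 0, 1], ![1, 1, 0], ![1, 0, 1], ![0, 1, 1]]

open Matrix in
lemma k4_cycleSpace (y : Fin 6 → ZMod 2) :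
    (∀ j : Fin 4, ∑ i, y i * (((if j = k4Fst i then 1 else 0) +
      (if j = k4Snd i then 1 else 0) : ℕ) : ZMod 2) = 0) ↔
    ∃ t : Fin 3 → ZMod 2, ∀ i, y i = k4Lab i ⬝ᵥ t := by
  have hadd : ∀ a b c : ZMod 2, a + b + c = 0 ↔ c = a + b := by decide
  constructor
  · intro h
    have h0 := h 0
    have h1 := h 1
    have h2 := h 2
    simp [Fin.sum_univ_six, k4Fst, k4Snd] at h0 h1 h2
    rw [hadd] at h0 h1 h2
    refine ⟨![y 0, y 1, y 2], fun i => ?_⟩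
    fin_cases i <;> simp [k4Lab, dotProduct, Fin.sum_univ_three, h0, h1, h2]
  · rintro ⟨t, ht⟩ j
    simp only [ht, Fin.sum_univ_six, k4Lab, dotProduct, Fin.sum_univ_three]
    generalize t 0 = a
    generalize t 1 = b
    generalize t 2 = c
    fin_cases j <;> simp [k4Fst, k4Snd] <;> revert a b c <;> decide

lemma exists_label_K4 {V α : Type u} {K : Graph V α} (hK : IsK4 K) :
    ∃ lam, K4Label K lam := by
  classical
  obtain ⟨v, hv, ed, hed, hE, hinc⟩ := hK
  have hnd : ∀ i, ¬ (s(k4Fst i, k4Snd i)).IsDiag := by decide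
  let ε : Fin 6 → α := fun i => ed ⟨s(k4Fst i, k4Snd i), hnd i⟩
  have hε : Function.Injective ε := by
    intro i j hij
    have h1 := congrArg Subtype.val (hed hij)
    have h2 : ∀ i j, s(k4Fst i, k4Snd i) = s(k4Fst j, k4Snd j) → i = j := by decide
    exact h2 i j h1
  have hE' : K.E = Set.range ε := by
    rw [hE]
    apply Set.Subset.antisymm
    · rintro _ ⟨⟨p, hp⟩, rfl⟩
      have h : ∀ p : Sym2 (Fin 4), ¬ p.IsDiag → ∃ i, s(k4Fst i, k4Snd i) = p := by decide
      obtain ⟨i, rfl⟩ := h p hp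
      exact ⟨i, rfl⟩
    · rintro _ ⟨i, rfl⟩
      exact ⟨_, rfl⟩
  have hinc' : ∀ i, K.inc (ε i) = s(v (k4Fst i), v (k4Snd i)) := by
    intro i
    simp [ε, hinc]
  have hlam : ∀ i, Function.extend ε k4Lab 0 (ε i) = k4Lab i := fun i => hε.extend_apply _ _ i
  refine ⟨Function.extend ε k4Lab 0, ?_, ?_, ?_, ?_⟩
  · rw [hE']; exact Set.finite_range ε
  · intro w hw0 hw1
    have h : ∀ w : Fin 3 → ZMod 2, w ≠ 0 → w ≠ ![1, 1, 1] → ∃ i, k4Lab i = w := by decide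
    obtain ⟨i, hi⟩ := h w hw0 hw1
    exact ⟨ε i, hE' ▸ ⟨i, rfl⟩, by rw [hlam, hi]⟩
  · rw [hE']
    rintro _ ⟨i, rfl⟩
    rw [hlam]
    revert i
    decide
  · intro x hx
    have hbd : ∀ u, K.bd x u = ∑ i, x (ε i) * (K.ends (ε i) u : ZMod 2) := by
      intro u
      rw [K.bd_apply, ← Finset.sum_image (f := fun a => x a * (K.ends a u : ZMod 2))
        (s := Finset.univ) (g := ε) (fun i _ j _ h => hε h)]
      refine Finset.sum_subset ?_ ?_
      · intro a ha
        have haE : a ∈ K.E := by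
          by_contra h
          exact (Finsupp.mem_support_iff.1 ha) (hx a h)
        rw [hE'] at haE
        obtain ⟨i, rfl⟩ := haE
        simp
      · intro a _ ha
        simp [Finsupp.notMem_support_iff.1 ha]
    have hiff : K.bd x = 0 ↔ ∀ j : Fin 4, ∑ i, x (ε i) * (((if j = k4Fst i then 1 else 0) +
      (if j = k4Snd i then 1 else 0) : ℕ) : ZMod 2) = 0 := by
      constructor
      · intro h j
        have h1 := congrFun h (v j)
        rw [hbd] at h1
        rw [← show _ = (0 : ZMod 2) from h1]
        refine Finset.sum_congr rfl fun i _ => ?_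
        rw [K.ends_eq (hinc' i)]
        simp only [hv.eq_iff]
      · intro h
        funext u
        rw [hbd]
        by_cases hu : ∃ j, v j = u
        · obtain ⟨j, rfl⟩ := hu
          rw [Pi.zero_apply, ← h j]
          refine Finset.sum_congr rfl fun i _ => ?_
          rw [K.ends_eq (hinc' i)]
          simp only [hv.eq_iff]
        · push Not at hu
          refine Finset.sum_eq_zero fun i _ => ?_
          rw [K.ends_eq (hinc' i)]
          simp [(hu _).symm]
    rw [hiff, k4_cycleSpace (fun i => x (ε i)), hE']
    simp [hlam]

/-- Subdividing `e` into `f` and `g` keeps the cycle space: its vectors agree on `f` and `g`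
because the new vertex has degree two, so `f` and `g` both inherit the label of `e`. -/
lemma exists_label_of_elemSub {V α : Type u} {G H : Graph V α} (hsub : ElemSub G H)
    (hG : ∃ lam, K4Label G lam) : ∃ lam, K4Label H lam := by
  classical
  obtain ⟨lam, hfin, hsurj, hne, hcyc⟩ := hG
  obtain ⟨e, he, f, g, u, v, w, hinc, hw, hfg, hf, hg, hE, hHf, hHg, hH⟩ := hsub
  have huG : u ∈ G.verts := ⟨e, he, by simp [hinc]⟩
  have hvG : v ∈ G.verts := ⟨e, he, by simp [hinc]⟩
  have hwu : w ≠ u := fun h => hw (h ▸ huG)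
  have hwv : w ≠ v := fun h => hw (h ▸ hvG)
  have hold : ∀ a ∈ G.E \ {e}, a ≠ f ∧ a ≠ g :=
    fun a ha => ⟨fun h => hf (h ▸ ha), fun h => hg (h ▸ ha)⟩
  have hfH : f ∈ H.E := by simp [hE]
  have hgH : g ∈ H.E := by simp [hE]
  have hl_old : ∀ a ∈ G.E \ {e}, (if a = f ∨ a = g then lam e else lam a) = lam a := by
    intro a ha; simp [hold a ha]
  refine ⟨fun a => if a = f ∨ a = g then lam e else lam a, ?_, ?_, ?_, ?_⟩
  · rw [hE]
    exact (hfin.subset Set.sdiff_subset).union (by simp)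
  · intro z hz0 hz1
    obtain ⟨a, ha, rfl⟩ := hsurj z hz0 hz1
    by_cases hae : a = e
    · exact ⟨f, hfH, by simp [hae]⟩
    · exact ⟨a, by rw [hE]; exact Or.inl ⟨ha, hae⟩, hl_old a ⟨ha, hae⟩⟩
  · intro a ha
    rw [hE] at ha
    rcases ha with ha | ha | ha
    · simp only [hl_old a ha]; exact hne a ha.1
    · simpa [ha] using hne e he
    · rw [Set.mem_singleton_iff] at ha
      simpa [ha] using hne e he
  · intro x hx
    set r := (x.erase f).erase g with hr
    have hrf : r f = 0 := by simp [hr, Finsupp.erase_ne hfg]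
    have hrg : r g = 0 := by simp [hr]
    have hr_ne : ∀ a, a ≠ f → a ≠ g → r a = x a := by
      intro a h1 h2; simp [hr, Finsupp.erase_ne, h1, h2]
    have hr_off : ∀ a, a ∉ G.E \ {e} → r a = 0 := by
      intro a ha
      by_cases h1 : a = f
      · rw [h1, hrf]
      by_cases h2 : a = g
      · rw [h2, hrg]
      rw [hr_ne a h1 h2]
      apply hx
      rw [hE]
      rintro (h | h | h)
      exacts [ha h, h1 h, h2 h]
    have hxr : x = r + Finsupp.single f (x f) + Finsupp.single g (x g) := by
      ext a
      by_cases h1 : a = f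
      · subst h1; simp [hrf, hfg]
      by_cases h2 : a = g
      · subst h2; simp [hrg, hfg.symm]
      simp [hr_ne a h1 h2, Ne.symm h1, Ne.symm h2]
    have hbr : ∀ z, H.bd r z = G.bd r z := by
      intro z
      rw [Graph.bd_apply, Graph.bd_apply]
      refine Finset.sum_congr rfl fun a ha => ?_
      have ha' : a ∈ G.E \ {e} := by
        by_contra h
        exact Finsupp.mem_support_iff.1 ha (hr_off a h)
      simp only [Graph.ends, hH a ha']
    have hbrw : G.bd r w = 0 := by
      rw [Graph.bd_apply]
      refine Finset.sum_eq_zero fun a ha => ?_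
      have ha' : a ∈ G.E \ {e} := by
        by_contra h
        exact Finsupp.mem_support_iff.1 ha (hr_off a h)
      rw [G.ends_eq_zero (fun h => hw ⟨a, ha'.1, h⟩)]
      simp
    have hbx : ∀ z, H.bd x z = G.bd r z + x f * (H.ends f z : ZMod 2) +
        x g * (H.ends g z : ZMod 2) := by
      intro z
      conv_lhs => rw [hxr]
      simp only [map_add, Pi.add_apply, Graph.bd_single, hbr]
    set x' := r + Finsupp.single e (x f) with hx'
    have hbx' : ∀ z, G.bd x' z = G.bd r z + x f * (G.ends e z : ZMod 2) := by
      intro z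
      simp only [hx', map_add, Pi.add_apply, Graph.bd_single]
    -- when `x f = x g` the contributions of `f` and `g` at the new vertex cancel
    have hbd_eq : x f = x g → H.bd x = G.bd x' := by
      intro h
      funext z
      rw [hbx, hbx', ← h, H.ends_eq hHf, H.ends_eq hHg, G.ends_eq hinc]
      push_cast
      generalize (if z = w then (1 : ZMod 2) else 0) = c
      have hc : x f * c + x f * c = 0 := CharTwo.add_self_eq_zero _
      linear_combination hc
    have hx'e : x' e = x f := by simp [hx', hr_off e (by simp)]
    have hx'old : ∀ a ∈ G.E \ {e}, x' a = x a := by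
      intro a ha
      have hae : e ≠ a := fun h => ha.2 h.symm
      simp [hx', hr_ne a (hold a ha).1 (hold a ha).2, hae]
    have hcyc' := hcyc x' (by
      intro a ha
      have hae : e ≠ a := fun h => ha (h ▸ he)
      simp [hx', hr_off a (fun h => ha h.1), hae])
    constructor
    · intro hb
      have hxfg : x f = x g := by
        have h := congrFun hb w
        rw [hbx, hbrw, H.ends_eq hHf, H.ends_eq hHg] at h
        simp [hwu, hwv] at h
        exact CharTwo.add_eq_zero.1 h
      rw [hbd_eq hxfg, hcyc'] at hb
      obtain ⟨t, ht⟩ := hb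
      refine ⟨t, fun a ha => ?_⟩
      have hte := ht e he
      rw [hx'e] at hte
      rw [hE] at ha
      rcases ha with ha | ha | ha
      · simp only [hl_old a ha]
        rw [← hx'old a ha, ht a ha.1]
      · simp [ha, hte]
      · rw [Set.mem_singleton_iff] at ha
        simp [ha, ← hxfg, hte]
    · rintro ⟨t, ht⟩
      have htf := ht f hfH
      have htg := ht g hgH
      simp only [true_or, or_true, if_true] at htf htg
      rw [hbd_eq (htf.trans htg.symm), hcyc']
      refine ⟨t, fun a ha => ?_⟩
      by_cases hae : a = e
      · rw [hae, hx'e, htf]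
      · have ha' : a ∈ G.E \ {e} := ⟨ha, hae⟩
        have := ht a (by rw [hE]; exact Or.inl ha')
        simp only [hl_old a ha'] at this
        rw [hx'old a ha', this]

/-! ### Lift representations -/

/-- If `N = M(H) = L(G)`, then a set contains a cycle of `H` as soon as it contains two
cycles of `G`. -/
lemma exists_cycle_of_hasTwoCycles {V W α : Type u} {H : Graph V α} {G : Graph W α}
    {N : Matroid α} (hN : IsGraphicRep H N) (hL : IsLiftRep G N) {X : Set α}
    (hX : G.HasTwoCycles X) : ∃ C, H.IsCycle C ∧ C ⊆ X := by
  obtain ⟨C₁, C₂, h₁, h₂, hne, hs₁, hs₂⟩ := hX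
  obtain ⟨F, hF⟩ := (h₁.2.1.union h₂.2.1).exists_finset_coe
  obtain ⟨D, hDF, hD⟩ := exists_minimal_le_of_wellFoundedLT
    (fun D : Finset α => (D : Set α) ⊆ G.E ∧ G.HasTwoCycles (D : Set α)) F
    ⟨by rw [hF]; exact Set.union_subset h₁.1 h₂.1, C₁, C₂, h₁, h₂, hne,
      by rw [hF]; exact Set.subset_union_left, by rw [hF]; exact Set.subset_union_right⟩
  have hlift : G.LiftCircuit (D : Set α) := by
    refine ⟨hD.prop, fun Y hY hYD => ?_⟩
    obtain ⟨Y', rfl⟩ := (D.finite_toSet.subset hYD).exists_finset_coe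
    exact Finset.coe_subset.2 (hD.le_of_le hY (Finset.coe_subset.1 hYD))
  refine ⟨D, (hN.2 _).1 ((hL.2 _).2 hlift), ?_⟩
  refine (Finset.coe_subset.2 hDF).trans ?_
  rw [hF]
  exact Set.union_subset hs₁ hs₂

open Matrix in
/-- No graph `G` satisfies `L(G) = M(H)` when `H` carries a labelling of `K₄` type: two opposite
label classes would both contain a cycle of `G`, although their union contains no cycle
of `H`. -/
theorem not_lift_of_label {V W α : Type u} {H : Graph V α} {G : Graph W α} {N : Matroid α}
    (hN : IsGraphicRep H N) (hL : IsLiftRep G N) {lam : α → Fin 3 → ZMod 2}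
    (hlam : K4Label H lam) : False := by
  classical
  obtain ⟨hfin, hsurj, hne, hcyc⟩ := hlam
  let T : (Fin 3 → ZMod 2) → Set α := fun t => {e ∈ H.E | lam e ⬝ᵥ t ≠ 0}
  -- every cycle of `H` is some `T t`, with `t ≠ 0`
  have hcycT : ∀ C, H.IsCycle C → ∃ t, t ≠ 0 ∧ C = T t := by
    intro C hC
    obtain ⟨x, hx, hb⟩ := H.exists_bd_of_cycle hC
    have hxC : ∀ a, x a ≠ 0 ↔ a ∈ C := by
      intro a; rw [← hx]; simp
    obtain ⟨t, ht⟩ := (hcyc x (fun a ha => by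
      by_contra h
      exact ha (hC.1 ((hxC a).1 h)))).1 hb
    have hCT : C = T t := by
      ext a
      constructor
      · intro ha
        exact ⟨hC.1 ha, by rw [← ht a (hC.1 ha)]; exact (hxC a).2 ha⟩
      · rintro ⟨haE, ha⟩
        rw [← ht a haE] at ha
        exact (hxC a).1 ha
    refine ⟨t, ?_, hCT⟩
    rintro rfl
    obtain ⟨a, ha⟩ := hC.2.2.1
    rw [hCT] at ha
    exact ha.2 (by simp)
  -- and every `T t` with `t ≠ 0` contains a cycle of `H`, hence two cycles of `G`
  have htwo : ∀ t, t ≠ 0 → G.HasTwoCycles (T t) := by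
    intro t ht
    let x : α →₀ ZMod 2 := Finsupp.indicator hfin.toFinset (fun e _ => lam e ⬝ᵥ t)
    have hx : ∀ a ∈ H.E, x a = lam a ⬝ᵥ t := by
      intro a ha; simp [x, Finsupp.indicator_apply, ha]
    have hx0 : ∀ a, a ∉ H.E → x a = 0 := by
      intro a ha; simp [x, Finsupp.indicator_apply, ha]
    have hxne : x ≠ 0 := by
      intro h
      have hex : ∀ t : Fin 3 → ZMod 2, t ≠ 0 →
          ∃ w : Fin 3 → ZMod 2, w ≠ 0 ∧ w ≠ ![1, 1, 1] ∧ w ⬝ᵥ t ≠ 0 := by decide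
      obtain ⟨w, hw0, hw1, hwt⟩ := hex t ht
      obtain ⟨e, he, rfl⟩ := hsurj w hw0 hw1
      rw [← hx e he, h] at hwt
      exact hwt rfl
    obtain ⟨D, hD, hDx⟩ := H.exists_cycle_of_bd hxne ((hcyc x hx0).2 ⟨t, hx⟩) (by
      intro a ha
      by_contra h
      exact Finsupp.mem_support_iff.1 ha (hx0 a h))
    obtain ⟨C₁, C₂, h₁, h₂, h12, hs₁, hs₂⟩ := ((hL.2 D).1 ((hN.2 D).2 hD)).prop.2
    have hDT : D ⊆ T t := by
      intro a ha
      refine ⟨hD.1 ha, ?_⟩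
      rw [← hx a (hD.1 ha)]
      exact Finsupp.mem_support_iff.1 (hDx ha)
    exact ⟨C₁, C₂, h₁, h₂, h12, hs₁.trans hDT, hs₂.trans hDT⟩
  -- two cycles of `G` inside `X` yield a subset of `X` of the form `T t`
  have hback : ∀ X, G.HasTwoCycles X → ∃ t, t ≠ 0 ∧ T t ⊆ X := by
    intro X hX
    obtain ⟨C, hC, hCX⟩ := exists_cycle_of_hasTwoCycles hN hL hX
    obtain ⟨t, ht, rfl⟩ := hcycT C hC
    exact ⟨t, ht, hCX⟩
  -- `(T s ∪ T t) \ {e, f}` contains no cycle of `H` when `e`, `f` and a label absent from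
  -- `T s ∪ T t` span `GF(2)³`; then `T s ∩ T t` must contain a cycle of `G`
  have hinter : ∀ s t a b c : Fin 3 → ZMod 2, s ≠ 0 → t ≠ 0 →
      a ≠ 0 → a ≠ ![1, 1, 1] → b ≠ 0 → b ≠ ![1, 1, 1] → c ≠ 0 → c ≠ ![1, 1, 1] →
      c ⬝ᵥ s = 0 → c ⬝ᵥ t = 0 →
      (∀ r, a ⬝ᵥ r = 0 → b ⬝ᵥ r = 0 → c ⬝ᵥ r = 0 → r = 0) →
      ∃ D, G.IsCycle D ∧ D ⊆ T s ∩ T t := by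
    intro s t a b c hs ht ha0 ha1 hb0 hb1 hc0 hc1 hcs hct hr
    by_contra hno
    obtain ⟨e, he, rfl⟩ := hsurj a ha0 ha1
    obtain ⟨f, hf, rfl⟩ := hsurj b hb0 hb1
    obtain ⟨g, hg, rfl⟩ := hsurj c hc0 hc1
    obtain ⟨r, hr0, hrs⟩ := hback _ (G.hasTwoCycles_of_union (htwo s hs) (htwo t ht) hno e f)
    refine hr0 (hr r ?_ ?_ ?_)
    · by_contra h
      exact (hrs ⟨he, h⟩).2 (by simp)
    · by_contra h
      exact (hrs ⟨hf, h⟩).2 (by simp)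
    · by_contra h
      rcases (hrs ⟨hg, h⟩).1 with hgs | hgt
      exacts [hgs.2 hcs, hgt.2 hct]
  -- two pairs of triangles, meeting in the classes `(1,1,0)` and `(0,0,1)` respectively
  obtain ⟨P, hP, hPs⟩ := hinter ![1, 0, 0] ![0, 1, 0] ![1, 1, 0] ![1, 0, 0] ![0, 0, 1]
    (by decide) (by decide) (by decide) (by decide) (by decide) (by decide) (by decide)
    (by decide) (by decide) (by decide) (by decide)
  obtain ⟨Q, hQ, hQs⟩ := hinter ![0, 0, 1] ![1, 1, 1] ![0, 0, 1] ![1, 0, 0] ![1, 1, 0]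
    (by decide) (by decide) (by decide) (by decide) (by decide) (by decide) (by decide)
    (by decide) (by decide) (by decide) (by decide)
  have hPl : ∀ a ∈ P, lam a = ![1, 1, 0] := by
    intro a ha
    have h : ∀ l : Fin 3 → ZMod 2, l ≠ ![1, 1, 1] → l ⬝ᵥ ![1, 0, 0] ≠ 0 →
        l ⬝ᵥ ![0, 1, 0] ≠ 0 → l = ![1, 1, 0] := by decide
    exact h _ (hne a (hPs ha).1.1) (hPs ha).1.2 (hPs ha).2.2
  have hQl : ∀ a ∈ Q, lam a = ![0, 0, 1] := by
    intro a ha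
    have h : ∀ l : Fin 3 → ZMod 2, l ≠ ![1, 1, 1] → l ⬝ᵥ ![0, 0, 1] ≠ 0 →
        l ⬝ᵥ ![1, 1, 1] ≠ 0 → l = ![0, 0, 1] := by decide
    exact h _ (hne a (hQs ha).1.1) (hQs ha).1.2 (hQs ha).2.2
  have hPQ : P ≠ Q := by
    rintro rfl
    obtain ⟨a, ha⟩ := hP.2.2.1
    have h := (hPl a ha).symm.trans (hQl a ha)
    revert h
    decide
  obtain ⟨r, hr0, hrs⟩ := hback (P ∪ Q)
    ⟨P, Q, hP, hQ, hPQ, Set.subset_union_left, Set.subset_union_right⟩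
  have hex : ∀ r : Fin 3 → ZMod 2, r ≠ 0 → ∃ l : Fin 3 → ZMod 2, l ≠ 0 ∧ l ≠ ![1, 1, 1] ∧
      l ≠ ![1, 1, 0] ∧ l ≠ ![0, 0, 1] ∧ l ⬝ᵥ r ≠ 0 := by decide
  obtain ⟨l, hl0, hl1, hlP, hlQ, hlr⟩ := hex r hr0
  obtain ⟨a, ha, rfl⟩ := hsurj l hl0 hl1
  rcases hrs ⟨ha, hlr⟩ with h | h
  exacts [hlP (hPl a h), hlQ (hQl a h)]

theorem statement_8 {V α : Type u} (K H : Graph V α) (hK : IsK4 K)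
    (hsub : IsSubdivision K H) (N : Matroid α) (hN : IsGraphicRep H N) :
    ¬ IsBicircularLift N := by
  rintro ⟨W, G, hL⟩
  have hlabel : ∃ lam, K4Label H lam := by
    clear hN hL
    induction hsub with
    | refl => exact exists_label_K4 hK
    | tail _ hstep ih => exact exists_label_of_elemSub hstep ih
  obtain ⟨lam, hlam⟩ := hlabel
  exact not_lift_of_label hN hL hlam

end BLFormal
end
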